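/- arXiv:2005.04354 — 4 statements merged into one kernel-verified Lean document; each statement's English description precedes it below -/
import Mathlib

section
/- Let p ≥ 3, θ ∈ (0, 1/2), let T be a tree on {1,…,p}, and let x_1,…,x_n be i.i.d. samples from P_{T,θ} (probabilities taken under the n-fold product measure). Let B_n be the event that there exists a spanning tree T' of the complete graph on {1,…,p} with E(T') ≠ E(T) and ∑_{e∈E(T')} Â_e ≥ ∑_{e∈E(T)} Â_e, i.e. the event that T is not the unique maximum-weight spanning tree for the weights Â. Then lim_{n→∞} −(1/n)·log ℙ(B_n) = −log(1 − θ·(1 − √(4θ(1−θ)))). In particular the error exponent depends only on θ and not on p or on the structure of T. -/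
open scoped Classical BigOperators
open Filter

noncomputable section

/-- Symmetric pair weight `w(x i, x j)` lifted to unordered pairs. -/
def pairWeight (θ : ℝ) {p : ℕ} (x : Fin p → Bool) : Sym2 (Fin p) → ℝ :=
  Sym2.lift ⟨fun i j => if x i = x j then 1 - θ else θ, fun i j => by
    dsimp only
    by_cases h : x i = x j
    · rw [if_pos h, if_pos h.symm]
    · rw [if_neg h, if_neg (fun hh => h hh.symm)]⟩

/-- The homogeneous zero-external-field Ising tree distribution. -/
def isingP (θ : ℝ) {p : ℕ} (T : SimpleGraph (Fin p)) (x : Fin p → Bool) : ℝ :=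
  (1 / 2) * ∏ e ∈ T.edgeFinset, pairWeight θ x e

/-- Probability of an event `A` about `n` i.i.d. samples from pmf `P`. -/
def iidProb {p : ℕ} (P : (Fin p → Bool) → ℝ) (n : ℕ)
    (A : Set (Fin n → Fin p → Bool)) : ℝ :=
  ∑ xs : Fin n → Fin p → Bool, if xs ∈ A then ∏ k, P (xs k) else 0

/-- Empirical agreement weight. -/
def Ahat {p n : ℕ} (xs : Fin n → Fin p → Bool) (i j : Fin p) : ℝ :=
  ((Finset.univ.filter (fun k : Fin n => xs k i = xs k j)).card : ℝ) / n

/-- Empirical agreement weight on unordered pairs. -/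
def AhatSym {p n : ℕ} (xs : Fin n → Fin p → Bool) : Sym2 (Fin p) → ℝ :=
  Sym2.lift ⟨fun i j => Ahat xs i j, fun i j => by
    have h : (Finset.univ.filter fun k : Fin n => xs k i = xs k j)
        = (Finset.univ.filter fun k : Fin n => xs k j = xs k i) :=
      Finset.filter_congr (fun k _ => ⟨Eq.symm, Eq.symm⟩)
    simp only [Ahat, h]⟩

/-- The path (Markov chain) tree on 3 nodes with edges {1,2},{2,3}. -/
def chainA : SimpleGraph (Fin 3) := SimpleGraph.fromEdgeSet {s(0,1), s(1,2)}

def chainB : SimpleGraph (Fin 3) := SimpleGraph.fromEdgeSet {s(0,2), s(1,2)}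

def chainC : SimpleGraph (Fin 3) := SimpleGraph.fromEdgeSet {s(0,1), s(0,2)}

def path4 : SimpleGraph (Fin 4) := SimpleGraph.fromEdgeSet {s(0,1), s(1,2), s(2,3)}

def Kexp (θ : ℝ) : ℝ := -Real.log (1 - θ * (1 - Real.sqrt (4 * θ * (1 - θ))))

def sigmaSq (θ : ℝ) : ℝ := θ * Real.sqrt (4 * θ * (1 - θ)) * Real.exp (Kexp θ)

def zTheta (θ : ℝ) : ℝ := Real.sqrt (θ / (1 - θ))

def ftilde (θ : ℝ) (n : ℕ) : ℝ :=
  Real.exp (-(n : ℝ) * Kexp θ) / Real.sqrt (2 * Real.pi * sigmaSq θ * n)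
    * (1 + (1 - 3 * sigmaSq θ) / (8 * sigmaSq θ * n))

def fn (θ : ℝ) (n : ℕ) : ℝ :=
  ftilde θ n / (1 - zTheta θ)
    * (1 - zTheta θ * (1 + zTheta θ) / (2 * (1 - zTheta θ) ^ 2 * sigmaSq θ * n))

/-- Hamming distance. -/
def hamming {p : ℕ} (x y : Fin p → Bool) : ℕ :=
  (Finset.univ.filter (fun i => x i ≠ y i)).card

/-- Noisy (BSC with crossover probability q) version of a distribution. -/
def noisy (q : ℝ) {p : ℕ} (P : (Fin p → Bool) → ℝ) (y : Fin p → Bool) : ℝ :=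
  ∑ x : Fin p → Bool, q ^ hamming x y * (1 - q) ^ (p - hamming x y) * P x

def beta1 (θ q : ℝ) : ℝ :=
  ((1 - q) ^ 3 + q ^ 3) * (θ * (1 - θ) / 2) + q * (1 - q) * ((1 - θ * (1 - θ)) / 2)

def beta2 (θ q : ℝ) : ℝ :=
  ((1 - q) ^ 3 + q ^ 3) * (θ ^ 2 / 2) + q * (1 - q) * ((1 - θ ^ 2) / 2)

def Kq (θ q : ℝ) : ℝ :=
  -Real.log (1 - 4 * ((beta1 θ q + beta2 θ q) / 2 - Real.sqrt (beta1 θ q * beta2 θ q)))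

def mu2 (θ q : ℝ) : ℝ := 4 * Real.sqrt (beta1 θ q * beta2 θ q) * Real.exp (Kq θ q)

def zq (θ q : ℝ) : ℝ := Real.sqrt (beta2 θ q / beta1 θ q)

def ftildeq (θ q : ℝ) (n : ℕ) : ℝ :=
  Real.exp (-(n : ℝ) * Kq θ q) / Real.sqrt (2 * Real.pi * mu2 θ q * n)
    * (1 + (1 - 3 * mu2 θ q) / (8 * mu2 θ q * n))

def fnq (θ q : ℝ) (n : ℕ) : ℝ :=
  ftildeq θ q n / (1 - zq θ q)
    * (1 - zq θ q * (1 + zq θ q) / (2 * (1 - zq θ q) ^ 2 * mu2 θ q * n))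

/-- Marginal of a pmf on `{0,1}^p` on a single coordinate. -/
def marg1 {p : ℕ} (Q : (Fin p → Bool) → ℝ) (i : Fin p) (a : Bool) : ℝ :=
  ∑ x ∈ Finset.univ.filter (fun x : Fin p → Bool => x i = a), Q x

/-- Marginal of a pmf on `{0,1}^p` on a pair of coordinates. -/
def marg2 {p : ℕ} (Q : (Fin p → Bool) → ℝ) (i j : Fin p) (a b : Bool) : ℝ :=
  ∑ x ∈ Finset.univ.filter (fun x : Fin p → Bool => x i = a ∧ x j = b), Q x

/-- Kullback-Leibler divergence between pmfs on a finite type. -/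
def klDiv {X : Type*} [Fintype X] (Q P : X → ℝ) : ℝ :=
  ∑ x : X, Q x * Real.log (Q x / P x)

/-- Empirical mutual information between coordinates `i` and `j`. -/
def mutInf {p : ℕ} (Q : (Fin p → Bool) → ℝ) (i j : Fin p) : ℝ :=
  ∑ a : Bool, ∑ b : Bool,
    marg2 Q i j a b * Real.log (marg2 Q i j a b / (marg1 Q i a * marg1 Q j b))

end

namespace S6
open SimpleGraph

lemma side {V : Type*} {G : SimpleGraph V} (hG : G.Connected) (i j w : V) :
    (G.deleteEdges {s(i,j)}).Reachable i w ∨ (G.deleteEdges {s(i,j)}).Reachable j w := by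
  by_contra hcon
  obtain ⟨q⟩ := hG.preconnected i w
  obtain ⟨d, hd, h1, h2⟩ := q.exists_boundary_dart
    {w | (G.deleteEdges {s(i,j)}).Reachable i w ∨ (G.deleteEdges {s(i,j)}).Reachable j w}
    (Or.inl (Reachable.refl _)) hcon
  simp only [Set.mem_ofPred_eq] at h1 h2
  by_cases he : s(d.fst, d.snd) = s(i,j)
  · rw [Sym2.eq_iff] at he
    apply h2
    rcases he with ⟨_, h⟩ | ⟨_, h⟩
    · right; rw [h]
    · left; rw [h]
  · have ha : (G.deleteEdges {s(i,j)}).Adj d.fst d.snd := by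
      rw [deleteEdges_adj]; exact ⟨d.adj, he⟩
    apply h2
    exact h1.imp (fun h => h.trans ha.reachable) (fun h => h.trans ha.reachable)

lemma path_sep {V : Type*} {G : SimpleGraph V} (hG : G.IsAcyclic) {i j : V} (q : G.Walk i j)
    (hq : q.IsPath) (e : Sym2 V) (he : e ∈ q.edges) : ¬ (G.deleteEdges {e}).Reachable i j := by
  induction e with
  | _ a b =>
  rw [reachable_deleteEdges_iff_exists_walk]
  rintro ⟨r, hr⟩
  have := hG.path_unique ⟨q, hq⟩ r.toPath
  have h2 : q = r.bypass := congrArg Subtype.val this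
  rw [h2] at he
  exact hr (r.edges_bypass_subset he)

lemma exch {p : ℕ} {T : SimpleGraph (Fin p)} (hT : T.IsTree) {a b i j : Fin p} (hab : T.Adj a b)
    (h : ¬ (T.deleteEdges {s(a,b)}).Reachable i j) :
    ∃ T' : SimpleGraph (Fin p), T'.IsTree ∧
      T'.edgeFinset = insert s(i,j) (T.edgeFinset.erase s(a,b)) ∧
      s(i,j) ∉ T.edgeFinset.erase s(a,b) := by
  have hij : i ≠ j := by rintro rfl; exact h (Reachable.refl _)
  refine ⟨T.deleteEdges {s(a,b)} ⊔ edge i j, ⟨?_, ?_⟩, ?_, ?_⟩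
  · have hle : T.deleteEdges {s(a,b)} ≤ T.deleteEdges {s(a,b)} ⊔ edge i j := le_sup_left
    have hadj : (T.deleteEdges {s(a,b)} ⊔ edge i j).Reachable i j := by
      apply Adj.reachable
      rw [sup_adj]; right; rw [edge_adj]; exact ⟨Or.inl ⟨rfl, rfl⟩, hij⟩
    have hR : (T.deleteEdges {s(a,b)} ⊔ edge i j).Reachable a b := by
      rcases side hT.connected a b i with h1 | h1 <;> rcases side hT.connected a b j with h2 | h2
      · exact absurd (h1.symm.trans h2) h
      · exact ((h1.mono hle).trans hadj).trans (h2.mono hle).symm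
      · exact ((h2.mono hle).trans hadj.symm).trans (h1.mono hle).symm
      · exact absurd (h1.symm.trans h2) h
    have : Nonempty (Fin p) := ⟨i⟩
    refine Connected.mk (fun x y => ?_)
    have hx : ∀ x, (T.deleteEdges {s(a,b)} ⊔ edge i j).Reachable a x := fun x => by
      rcases side hT.connected a b x with h1 | h1
      · exact h1.mono hle
      · exact hR.trans (h1.mono hle)
    exact (hx x).symm.trans (hx y)
  · exact (hT.isAcyclic.anti (deleteEdges_le _)).sup_edge_of_not_reachable h
  · ext e
    simp only [mem_edgeFinset, edgeSet_sup, edgeSet_deleteEdges, Finset.mem_insert, Finset.mem_erase,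
      edgeSet_edge_of_ne hij, Set.mem_union, Set.mem_sdiff, Set.mem_singleton_iff]
    tauto
  · intro hm
    apply h
    apply Adj.reachable
    rw [deleteEdges_adj]
    simp only [Finset.mem_erase, mem_edgeFinset, mem_edgeSet] at hm
    exact ⟨hm.2, hm.1⟩

lemma bridge {V : Type*} {T : SimpleGraph V} (hT : T.IsTree) {i j : V} (h : T.Adj i j) :
    ¬ (T.deleteEdges {s(i,j)}).Reachable i j :=
  isBridge_iff.1 (isAcyclic_iff_forall_adj_isBridge.1 hT.isAcyclic h)

/-- two tree edges at a common vertex -/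
lemma exists_two {p : ℕ} (hp : 3 ≤ p) {T : SimpleGraph (Fin p)} (hT : T.IsTree) :
    ∃ m u v, T.Adj m u ∧ T.Adj m v ∧ u ≠ v := by
  by_contra hcon
  push Not at hcon
  have h1 : ∀ m, T.degree m ≤ 1 := fun m => by
    rw [← card_neighborFinset_eq_degree, Finset.card_le_one]
    intro a ha b hb
    rw [mem_neighborFinset] at ha hb
    exact hcon m a b ha hb
  have h2 := T.sum_degrees_eq_twice_card_edges
  have h3 := hT.card_edgeFinset
  have h4 : ∑ v, T.degree v ≤ ∑ v : Fin p, 1 := Finset.sum_le_sum (fun m _ => h1 m)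
  simp at h3 h4
  omega

def Good {p : ℕ} (T : SimpleGraph (Fin p)) (i j u v : Fin p) : Prop :=
  T.Adj i j ∧ ¬ (T.deleteEdges {s(i,j)}).Reachable u v ∧ s(u,v) ≠ s(i,j)

lemma good_second {p : ℕ} {T : SimpleGraph (Fin p)} (hT : T.IsTree) {i j u v : Fin p}
    (h : Good T i j u v) : ∃ a b, T.Adj a b ∧ s(a,b) ≠ s(i,j) ∧
      ¬ (T.deleteEdges {s(a,b)}).Reachable u v := by
  obtain ⟨q, hq, -⟩ := hT.existsUnique_path u v
  obtain ⟨hij, hr, hne⟩ := h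
  have huv : u ≠ v := by rintro rfl; exact hr (Reachable.refl _)
  by_contra hcon
  push Not at hcon
  have key : ∀ e ∈ q.edges, e = s(i,j) := by
    intro e he
    by_contra hne'
    induction e with
    | _ a b =>
      exact path_sep hT.isAcyclic q hq _ he (hcon a b (q.adj_of_mem_edges he) hne')
  cases q with
  | nil => exact huv rfl
  | cons h1 q1 =>
    cases q1 with
    | nil => exact hne (key _ (by simp))
    | cons h2 q2 =>
      have e1 := key _ (by simp only [Walk.edges_cons]; exact List.mem_cons_self)
      have e2 := key _ (by simp only [Walk.edges_cons]; exact List.mem_cons_of_mem _ List.mem_cons_self)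
      have := hq.isTrail.edges_nodup
      rw [Walk.edges_cons, Walk.edges_cons, e1, e2] at this
      simp at this

lemma mwst {p : ℕ} {T : SimpleGraph (Fin p)} (hT : T.IsTree) (w : Sym2 (Fin p) → ℝ)
    (hw : ∀ i j u v, Good T i j u v → w s(u,v) < w s(i,j)) (k : ℕ) :
    ∀ T' : SimpleGraph (Fin p), T'.IsTree → (T.edgeFinset \ T'.edgeFinset).card = k →
      T'.edgeSet ≠ T.edgeSet →
      ∑ e ∈ T'.edgeFinset, w e < ∑ e ∈ T.edgeFinset, w e := by
  induction k with
  | zero =>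
    intro T' hT' hc hne
    exfalso
    rw [Finset.card_eq_zero, Finset.sdiff_eq_empty_iff_subset] at hc
    have := Finset.eq_of_subset_of_card_le hc (by
      have h1 := hT.card_edgeFinset
      have h2 := hT'.card_edgeFinset
      omega)
    apply hne
    rw [← coe_edgeFinset, ← coe_edgeFinset, this]
  | succ k ih =>
    intro T' hT' hc hne
    have : (T.edgeFinset \ T'.edgeFinset).Nonempty := by
      rw [← Finset.card_pos]; omega
    obtain ⟨e, he⟩ := this
    induction e with
    | _ i j =>
    have he' := he
    simp only [Finset.mem_sdiff, mem_edgeFinset, mem_edgeSet] at he'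
    obtain ⟨hij, hij'⟩ := he'
    obtain ⟨q, hq, -⟩ := hT'.existsUnique_path i j
    obtain ⟨d, hd, h1, h2⟩ := q.exists_boundary_dart
      {x | (T.deleteEdges {s(i,j)}).Reachable i x} (Reachable.refl _) (bridge hT hij)
    simp only [Set.mem_ofPred_eq] at h1 h2
    have hdq : s(d.fst, d.snd) ∈ q.edges := by
      rw [Walk.edges]; exact List.mem_map_of_mem hd
    have hsep := path_sep hT'.isAcyclic q hq _ hdq
    have hd' : T'.Adj d.fst d.snd := d.adj
    have hnr : ¬ (T.deleteEdges {s(i,j)}).Reachable d.fst d.snd := fun h => h2 (h1.trans h)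
    have hne1 : s(d.fst, d.snd) ≠ s(i,j) := by
      intro h
      have : s(d.fst, d.snd) ∈ T'.edgeSet := hd'
      rw [h] at this
      exact hij' this
    have hnT : s(d.fst, d.snd) ∉ T.edgeSet := by
      intro h
      exact hnr (Adj.reachable (by rw [deleteEdges_adj]; exact ⟨h, hne1⟩))
    have hlt := hw i j d.fst d.snd ⟨hij, hnr, hne1⟩
    obtain ⟨T2, hT2, hE, hn⟩ := exch hT' hd' hsep
    have hsum : ∑ e ∈ T2.edgeFinset, w e
        = w s(i,j) + (∑ e ∈ T'.edgeFinset, w e - w s(d.fst, d.snd)) := by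
      rw [hE, Finset.sum_insert hn, Finset.sum_erase_eq_sub (by simp)]
    have hcard : (T.edgeFinset \ T2.edgeFinset).card = k := by
      have : T.edgeFinset \ T2.edgeFinset = (T.edgeFinset \ T'.edgeFinset).erase s(i,j) := by
        rw [hE]
        ext x
        simp only [Finset.mem_sdiff, Finset.mem_insert, Finset.mem_erase, mem_edgeFinset]
        constructor
        · rintro ⟨hx, hx2⟩
          push Not at hx2
          refine ⟨hx2.1, hx, ?_⟩
          apply hx2.2
          rintro rfl
          exact hnT hx
        · rintro ⟨hx, hx2, hx3⟩
          exact ⟨hx2, by tauto⟩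
      rw [this, Finset.card_erase_of_mem he, hc]; rfl
    by_cases h2 : T2.edgeSet = T.edgeSet
    · have : T2 = T := edgeSet_injective h2
      subst this
      linarith
    · have := ih T2 hT2 hcard h2
      linarith
end S6

namespace S6
section polysec
open Polynomial

lemma coeff_pow_nonneg (F : ℝ[X]) (h0 : ∀ k, 0 ≤ F.coeff k) (n : ℕ) : ∀ k, 0 ≤ (F ^ n).coeff k := by
  induction n with
  | zero => intro k; rw [pow_zero, coeff_one]; split_ifs <;> norm_num
  | succ n ih =>
    intro k
    rw [pow_succ, coeff_mul]
    exact Finset.sum_nonneg (fun x _ => mul_nonneg (ih _) (h0 _))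

lemma poly_even (F : ℝ[X]) (hd : F.natDegree ≤ 2)
    (hs : F.coeff 0 = F.coeff 2) (m : ℕ) :
    (F.eval 1) ^ (2 * m) ≤ (2 * m + 1) * (F ^ (2 * m)).coeff (2 * m) := by
  have hr : reflect 2 F = F := by
    ext k
    rw [coeff_reflect]
    by_cases hk : k ≤ 2
    · rw [revAt_le hk]
      interval_cases k
      · exact hs.symm
      · rfl
      · exact hs
    · rw [revAt_eq_self_of_lt (by omega)]
  have hdp : ∀ m, (F ^ m).natDegree ≤ 2 * m := fun m => by
    refine natDegree_pow_le.trans ?_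
    rw [mul_comm]; gcongr
  have hrp : ∀ m, reflect (2 * m) (F ^ m) = F ^ m := by
    intro m
    induction m with
    | zero => simp
    | succ m ih =>
      rw [pow_succ, mul_add, mul_one, reflect_mul _ _ (hdp m) hd, ih, hr]
  have hc : ∀ j ≤ 2 * m, (F ^ m).coeff (2 * m - j) = (F ^ m).coeff j := by
    intro j hj
    conv_rhs => rw [← hrp m, coeff_reflect, revAt_le hj]
  have h1 : (F ^ (2 * m)).coeff (2 * m) = ∑ j ∈ Finset.range (2 * m + 1), (F ^ m).coeff j ^ 2 := by
    rw [show F ^ (2 * m) = F ^ m * F ^ m by ring, coeff_mul,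
      Finset.Nat.sum_antidiagonal_eq_sum_range_succ_mk]
    refine Finset.sum_congr rfl (fun j hj => ?_)
    rw [Finset.mem_range] at hj
    simp only
    rw [hc j (by omega), sq]
  have h2 : (F.eval 1) ^ m = ∑ j ∈ Finset.range (2 * m + 1), (F ^ m).coeff j := by
    rw [← eval_pow, eval_eq_sum_range' (n := 2 * m + 1) (by have := hdp m; omega)]
    simp
  have h3 := sq_sum_le_card_mul_sum_sq (s := Finset.range (2 * m + 1)) (f := fun j => (F ^ m).coeff j)
  rw [← h2, ← h1, Finset.card_range] at h3
  push_cast at h3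
  calc (F.eval 1) ^ (2 * m) = ((F.eval 1) ^ m) ^ 2 := by ring
    _ ≤ _ := h3

lemma poly_lower (F : ℝ[X]) (hd : F.natDegree ≤ 2) (h0 : ∀ k, 0 ≤ F.coeff k)
    (hs : F.coeff 0 = F.coeff 2) (h1 : F.eval 1 ≤ 1) (hc1 : F.coeff 1 ≤ 1) (he : 0 ≤ F.eval 1)
    (n : ℕ) :
    F.coeff 1 * (F.eval 1) ^ n ≤ (n + 1) * (F ^ n).coeff n := by
  rcases Nat.even_or_odd' n with ⟨m, rfl | rfl⟩
  · have := poly_even F hd hs m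
    push_cast
    refine le_trans ?_ this
    exact mul_le_of_le_one_left (by positivity) hc1
  · have h := poly_even F hd hs m
    have h2 : F.coeff 1 * (F ^ (2 * m)).coeff (2 * m) ≤ (F ^ (2 * m + 1)).coeff (2 * m + 1) := by
      rw [pow_succ, coeff_mul, mul_comm]
      exact Finset.single_le_sum (f := fun x : ℕ × ℕ => (F ^ (2 * m)).coeff x.1 * F.coeff x.2)
        (fun x _ => mul_nonneg (coeff_pow_nonneg F h0 _ _) (h0 _))
        (a := (2 * m, 1)) (by simp)
    have h3 : (F.eval 1) ^ (2 * m + 1) ≤ (F.eval 1) ^ (2 * m) :=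
      pow_le_pow_of_le_one he h1 (by omega)
    have h4 := coeff_pow_nonneg F h0 (2 * m) (2 * m)
    have h5 := h0 1
    push_cast
    calc F.coeff 1 * (F.eval 1) ^ (2 * m + 1)
        ≤ F.coeff 1 * ((2 * m + 1) * (F ^ (2 * m)).coeff (2 * m)) := by
          gcongr; exact h3.trans h
      _ = (2 * m + 1) * (F.coeff 1 * (F ^ (2 * m)).coeff (2 * m)) := by ring
      _ ≤ (2 * m + 1 + 1) * (F.coeff 1 * (F ^ (2 * m)).coeff (2 * m)) := by
          gcongr; linarith
      _ ≤ _ := by gcongr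

lemma zero_sum_lower {α : Type*} [Fintype α] (Q : α → ℝ) (hQ : ∀ x, 0 ≤ Q x) (Z : α → ℤ)
    (hZ : ∀ x, Z x = -1 ∨ Z x = 0 ∨ Z x = 1) (hQ1 : ∑ x, Q x ≤ 1)
    (hs : ∑ x, (if Z x = 1 then Q x else 0) = ∑ x, (if Z x = -1 then Q x else 0)) (n : ℕ) :
    (∑ x, (if Z x = 0 then Q x else 0)) * (∑ x, Q x) ^ n ≤
      (n + 1) * ∑ xs : Fin n → α, if ∑ k, Z (xs k) = 0 then ∏ k, Q (xs k) else 0 := by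
  set z : α → ℕ := fun x => (Z x + 1).toNat with hz
  have hzZ : ∀ x, (z x : ℤ) = Z x + 1 := fun x => by
    rw [hz]; rcases hZ x with h | h | h <;> simp [h]
  set F : ℝ[X] := ∑ x, monomial (z x) (Q x) with hF
  have hco : ∀ k, F.coeff k = ∑ x, if z x = k then Q x else 0 := fun k => by
    rw [hF, finsetSum_coeff]; simp only [coeff_monomial]
  have hc : ∀ k : ℕ, F.coeff k = ∑ x, if Z x = (k : ℤ) - 1 then Q x else 0 := fun k => by
    rw [hco]
    refine Finset.sum_congr rfl (fun x _ => ?_)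
    have := hzZ x
    congr 1
    apply propext
    omega
  have hev : F.eval 1 = ∑ x, Q x := by rw [hF, eval_finsetSum]; simp
  have hnn : 0 ≤ ∑ x, Q x := Finset.sum_nonneg (fun x _ => hQ x)
  have hpow : (F ^ n).coeff n
      = ∑ xs : Fin n → α, if ∑ k, Z (xs k) = 0 then ∏ k, Q (xs k) else 0 := by
    rw [hF, Fintype.sum_pow, finsetSum_coeff]
    refine Finset.sum_congr rfl (fun xs _ => ?_)
    have : ∏ k, monomial (z (xs k)) (Q (xs k)) = monomial (∑ k, z (xs k)) (∏ k, Q (xs k)) := by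
      simp only [← C_mul_X_pow_eq_monomial, Finset.prod_mul_distrib, Finset.prod_pow_eq_pow_sum,
        map_prod]
    rw [this, coeff_monomial]
    have h2 : ((∑ k, z (xs k) : ℕ) : ℤ) = ∑ k, Z (xs k) + n := by
      push_cast
      simp only [hzZ, Finset.sum_add_distrib]
      simp
    congr 1
    apply propext
    omega
  have hk : ∀ k, 0 ≤ F.coeff k := fun k => by
    rw [hco]; exact Finset.sum_nonneg (fun x _ => by split_ifs; exacts [hQ x, le_rfl])
  have h1 : F.coeff 1 = ∑ x, (if Z x = 0 then Q x else 0) := by rw [hc]; simp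
  have := poly_lower F ?_ hk ?_ (by rw [hev]; exact hQ1) ?_ (by rw [hev]; exact hnn) n
  · rw [hev, hpow, h1] at this
    exact this
  · refine natDegree_sum_le_of_forall_le _ _ (fun x _ => ?_)
    refine (natDegree_monomial_le _).trans ?_
    have := hzZ x
    rcases hZ x with h | h | h <;> omega
  · rw [hc, hc]
    norm_num
    exact hs.symm
  · rw [h1]
    refine le_trans (Finset.sum_le_sum (fun x _ => ?_)) hQ1
    split_ifs
    exacts [le_rfl, hQ x]

end polysec

lemma prod_zpow' {ι : Type*} (s : ℝ) (hs : s ≠ 0) (S : Finset ι) (f : ι → ℤ) :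
    ∏ k ∈ S, s ^ f k = s ^ ∑ k ∈ S, f k := by
  induction S using Finset.induction_on with
  | empty => simp
  | insert a S ha ih => rw [Finset.prod_insert ha, Finset.sum_insert ha, zpow_add₀ hs, ih]

lemma chernoff {α : Type*} [Fintype α] (P : α → ℝ) (hP : ∀ x, 0 ≤ P x) (Z : α → ℤ) (s : ℝ)
    (hs : 1 ≤ s) (n : ℕ) :
    ∑ xs : Fin n → α, (if 0 ≤ ∑ k, Z (xs k) then ∏ k, P (xs k) else 0)
      ≤ (∑ x, P x * s ^ Z x) ^ n := by
  rw [Fintype.sum_pow]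
  refine Finset.sum_le_sum (fun xs _ => ?_)
  have hs0 : 0 < s := by linarith
  have hpp : 0 ≤ ∏ k, P (xs k) := Finset.prod_nonneg (fun k _ => hP _)
  have hz : ∏ k, s ^ Z (xs k) = s ^ ∑ k, Z (xs k) := prod_zpow' s hs0.ne' _ _
  rw [Finset.prod_mul_distrib]
  split_ifs with h
  · refine le_mul_of_one_le_right hpp ?_
    rw [hz]
    exact one_le_zpow₀ hs h
  · exact mul_nonneg hpp (Finset.prod_nonneg (fun k _ => by positivity))
end S6

namespace S6
open SimpleGraph

noncomputable def flip {p : ℕ} (T : SimpleGraph (Fin p)) (i j : Fin p) (x : Fin p → Bool) :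
    Fin p → Bool :=
  fun w => if (T.deleteEdges {s(i,j)}).Reachable j w then !x w else x w

lemma flip_flip {p : ℕ} (T : SimpleGraph (Fin p)) (i j : Fin p) :
    Function.Involutive (flip T i j) := by
  intro x
  funext w
  simp only [flip]
  split_ifs <;> simp

lemma flip_keep {p : ℕ} {T : SimpleGraph (Fin p)} {i j u v : Fin p} (x : Fin p → Bool)
    (h : (T.deleteEdges {s(i,j)}).Reachable u v) :
    (flip T i j x u = flip T i j x v) ↔ x u = x v := by
  have : (T.deleteEdges {s(i,j)}).Reachable j u ↔ (T.deleteEdges {s(i,j)}).Reachable j v :=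
    ⟨fun h' => h'.trans h, fun h' => h'.trans h.symm⟩
  simp only [flip, this]
  split_ifs <;> simp

lemma flip_tog {p : ℕ} {T : SimpleGraph (Fin p)} (hT : T.IsTree) {i j u v : Fin p}
    (x : Fin p → Bool)
    (h : ¬ (T.deleteEdges {s(i,j)}).Reachable u v) :
    (flip T i j x u = flip T i j x v) ↔ x u ≠ x v := by
  have h1 := side hT.connected i j u
  have h2 := side hT.connected i j v
  simp only [flip]
  split_ifs with a b b
  · exact absurd (a.symm.trans b) h
  · cases x u <;> cases x v <;> simp
  · cases x u <;> cases x v <;> simp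
  · exact absurd ((h1.resolve_right a).symm.trans (h2.resolve_right b)) h

lemma reach_of_edge {p : ℕ} {T : SimpleGraph (Fin p)} {i j u v : Fin p} (huv : T.Adj u v)
    (hne : s(u,v) ≠ s(i,j)) : (T.deleteEdges {s(i,j)}).Reachable u v :=
  Adj.reachable (by rw [deleteEdges_adj]; exact ⟨huv, hne⟩)

lemma pw_mk (θ : ℝ) {p : ℕ} (x : Fin p → Bool) (i j : Fin p) :
    pairWeight θ x s(i,j) = if x i = x j then 1 - θ else θ := rfl

lemma pw_keep (θ : ℝ) {p : ℕ} {T : SimpleGraph (Fin p)} {i j : Fin p} (x : Fin p → Bool)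
    (e : Sym2 (Fin p)) (he : e ∈ T.edgeFinset) (hne : e ≠ s(i,j)) :
    pairWeight θ (flip T i j x) e = pairWeight θ x e := by
  induction e with
  | _ u v =>
    rw [mem_edgeFinset, mem_edgeSet] at he
    simp only [pw_mk, flip_keep x (reach_of_edge he hne)]

lemma pw_tog (θ : ℝ) {p : ℕ} {T : SimpleGraph (Fin p)} (hT : T.IsTree) {i j : Fin p}
    (hij : T.Adj i j) (x : Fin p → Bool) :
    pairWeight θ (flip T i j x) s(i,j) = 1 - pairWeight θ x s(i,j) := by
  simp only [pw_mk, flip_tog hT x (bridge hT hij)]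
  split_ifs <;> simp_all

lemma sum_flip {p : ℕ} (T : SimpleGraph (Fin p)) (i j : Fin p) (f : (Fin p → Bool) → ℝ) :
    ∑ x, f (flip T i j x) = ∑ x, f x :=
  Equiv.sum_comp (flip_flip T i j).toPerm f

lemma sum_prod (θ : ℝ) {p : ℕ} {T : SimpleGraph (Fin p)} (hT : T.IsTree)
    (S : Finset (Sym2 (Fin p))) : S ⊆ T.edgeFinset →
      2 ^ S.card * ∑ x : Fin p → Bool, ∏ e ∈ S, pairWeight θ x e = 2 ^ p := by
  induction S using Finset.induction_on with
  | empty => simp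
  | insert e S he ih =>
    intro hS
    have ih := ih (fun x hx => hS (Finset.mem_insert_of_mem hx))
    rw [Finset.card_insert_of_notMem he, ← ih, pow_succ, mul_assoc]
    congr 1
    have heT := hS (Finset.mem_insert_self _ _)
    induction e with
    | _ i j =>
    have hij : T.Adj i j := by simpa using heT
    rw [two_mul]
    nth_rewrite 1 [← sum_flip T i j]
    rw [← Finset.sum_add_distrib]
    refine Finset.sum_congr rfl (fun x _ => ?_)
    rw [Finset.prod_insert he, Finset.prod_insert he, pw_tog θ hT hij]
    have : ∏ e ∈ S, pairWeight θ (flip T i j x) e = ∏ e ∈ S, pairWeight θ x e :=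
      Finset.prod_congr rfl (fun e heS => pw_keep θ x e (hS (Finset.mem_insert_of_mem heS))
        (by rintro rfl; exact he heS))
    rw [this]; ring

lemma ising_sum (θ : ℝ) {p : ℕ} {T : SimpleGraph (Fin p)} (hT : T.IsTree) :
    ∑ x, isingP θ T x = 1 := by
  have h := sum_prod θ hT T.edgeFinset (Finset.Subset.refl _)
  have h2 := hT.card_edgeFinset
  rw [Fintype.card_fin] at h2
  have h' : (2 : ℝ) ^ p = 2 ^ T.edgeFinset.card * 2 := by rw [← pow_succ, h2]
  rw [h'] at h
  have h3 := mul_left_cancel₀ (by positivity) h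
  simp only [isingP]
  rw [← Finset.mul_sum, h3]; norm_num

lemma pw_pos {θ : ℝ} (h0 : 0 < θ) (h1 : θ < 1/2) {p : ℕ} (x : Fin p → Bool) (e : Sym2 (Fin p)) :
    0 < pairWeight θ x e := by
  induction e with
  | _ i j => rw [pw_mk]; split_ifs <;> linarith

lemma ising_pos {θ : ℝ} (h0 : 0 < θ) (h1 : θ < 1/2) {p : ℕ} (T : SimpleGraph (Fin p))
    (x : Fin p → Bool) : 0 < isingP θ T x := by
  unfold isingP
  have : 0 < ∏ e ∈ T.edgeFinset, pairWeight θ x e := Finset.prod_pos (fun e _ => pw_pos h0 h1 x e)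
  positivity

lemma ising_flip (θ : ℝ) {p : ℕ} {T : SimpleGraph (Fin p)} (hT : T.IsTree)
    {i j : Fin p} (hij : T.Adj i j) (x : Fin p → Bool) :
    isingP θ T (flip T i j x) * pairWeight θ x s(i,j)
      = isingP θ T x * (1 - pairWeight θ x s(i,j)) := by
  have hm : s(i,j) ∈ T.edgeFinset := by simpa using hij
  unfold isingP
  rw [← Finset.mul_prod_erase _ _ hm, ← Finset.mul_prod_erase _ _ hm, pw_tog θ hT hij]
  have : ∏ e ∈ T.edgeFinset.erase s(i,j), pairWeight θ (flip T i j x) e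
      = ∏ e ∈ T.edgeFinset.erase s(i,j), pairWeight θ x e :=
    Finset.prod_congr rfl (fun e he => pw_keep θ x e (Finset.mem_of_mem_erase he)
      (Finset.ne_of_mem_erase he))
  rw [this]; ring

def Zf {p : ℕ} (i j u v : Fin p) (x : Fin p → Bool) : ℤ :=
  (if x u = x v then 1 else 0) - (if x i = x j then 1 else 0)

lemma Zf_cases {p : ℕ} (i j u v : Fin p) (x : Fin p → Bool) :
    Zf i j u v x = -1 ∨ Zf i j u v x = 0 ∨ Zf i j u v x = 1 := by
  unfold Zf; split_ifs <;> simp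

/-- probability of an event -/
noncomputable def pr (θ : ℝ) {p : ℕ} (T : SimpleGraph (Fin p)) (A : (Fin p → Bool) → Prop) : ℝ :=
  ∑ x, if A x then isingP θ T x else 0

lemma pr_compl (θ : ℝ) {p : ℕ} {T : SimpleGraph (Fin p)} (hT : T.IsTree)
    (A : (Fin p → Bool) → Prop) : pr θ T (fun x => ¬ A x) = 1 - pr θ T A := by
  rw [eq_sub_iff_add_eq, ← ising_sum θ hT]
  unfold pr
  rw [← Finset.sum_add_distrib]
  refine Finset.sum_congr rfl (fun x _ => ?_)
  by_cases h : A x <;> simp [h]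

lemma pr_ratio (θ : ℝ) {p : ℕ} {T : SimpleGraph (Fin p)} (hT : T.IsTree)
    {i j : Fin p} (hij : T.Adj i j) (A B : (Fin p → Bool) → Prop)
    (hAB : ∀ x, B (flip T i j x) ↔ A x) (hA : ∀ x, A x → x i ≠ x j) :
    θ * pr θ T B = (1 - θ) * pr θ T A := by
  unfold pr
  rw [← sum_flip T i j, Finset.mul_sum, Finset.mul_sum]
  refine Finset.sum_congr rfl (fun x _ => ?_)
  simp only [hAB]
  split_ifs with h
  · have := ising_flip θ hT hij x
    rw [pw_mk, if_neg (hA x h)] at this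
    linarith
  · simp

lemma pr_ratio_le {θ : ℝ} (h0 : 0 < θ) (h1 : θ < 1/2) {p : ℕ} {T : SimpleGraph (Fin p)}
    (hT : T.IsTree)
    {i j : Fin p} (hij : T.Adj i j) (A B : (Fin p → Bool) → Prop)
    (hAB : ∀ x, B (flip T i j x) ↔ A x) :
    θ * pr θ T B ≤ (1 - θ) * pr θ T A := by
  unfold pr
  rw [← sum_flip T i j, Finset.mul_sum, Finset.mul_sum]
  refine Finset.sum_le_sum (fun x _ => ?_)
  simp only [hAB]
  split_ifs with h
  · have := ising_flip θ hT hij x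
    have hp := ising_pos h0 h1 T x
    have hp2 := ising_pos h0 h1 T (flip T i j x)
    rw [pw_mk] at this
    split_ifs at this
    · nlinarith
    · linarith
  · simp

/-- moment generating function -/
lemma mgf {θ : ℝ} (h0 : 0 < θ) (h1 : θ < 1/2) {p : ℕ} {T : SimpleGraph (Fin p)} (hT : T.IsTree)
    {i j u v : Fin p} (hg : Good T i j u v) (s : ℝ) (hs : 0 < s) (hs2 : s ^ 2 * θ = 1 - θ) :
    (∑ x, (if Zf i j u v x = 1 then isingP θ T x * s ^ Zf i j u v x else 0)
      = θ * s * pr θ T (fun x => Zf i j u v x ≠ 0)) ∧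
    (∑ x, (if Zf i j u v x = -1 then isingP θ T x * s ^ Zf i j u v x else 0)
      = θ * s * pr θ T (fun x => Zf i j u v x ≠ 0)) ∧
    (∑ x, (if Zf i j u v x = 0 then isingP θ T x * s ^ Zf i j u v x else 0)
      = 1 - pr θ T (fun x => Zf i j u v x ≠ 0)) ∧
    (∑ x, isingP θ T x * s ^ Zf i j u v x
      = 1 - (1 - 2 * θ * s) * pr θ T (fun x => Zf i j u v x ≠ 0)) ∧
    θ ≤ pr θ T (fun x => Zf i j u v x ≠ 0) := by
  set Z := Zf i j u v with hZ
  set N := pr θ T (fun x => Z x ≠ 0) with hN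
  have e1 : ∑ x, (if Z x = 1 then isingP θ T x * s ^ Z x else 0) = s * pr θ T (fun x => Z x = 1) := by
    unfold pr
    rw [Finset.mul_sum]
    refine Finset.sum_congr rfl (fun x _ => ?_)
    split_ifs with h
    · rw [h, zpow_one, mul_comm]
    · simp
  have e2 : ∑ x, (if Z x = -1 then isingP θ T x * s ^ Z x else 0)
      = s⁻¹ * pr θ T (fun x => Z x = -1) := by
    unfold pr
    rw [Finset.mul_sum]
    refine Finset.sum_congr rfl (fun x _ => ?_)
    split_ifs with h
    · rw [h, zpow_neg_one, mul_comm]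
    · simp
  have e3 : ∑ x, (if Z x = 0 then isingP θ T x * s ^ Z x else 0) = 1 - N := by
    rw [hN, ← pr_compl θ hT]
    unfold pr
    refine Finset.sum_congr rfl (fun x _ => ?_)
    by_cases h : Z x = 0 <;> simp [h]
  have e4 : N = pr θ T (fun x => Z x = 1) + pr θ T (fun x => Z x = -1) := by
    rw [hN]; unfold pr
    rw [← Finset.sum_add_distrib]
    refine Finset.sum_congr rfl (fun x _ => ?_)
    rcases Zf_cases i j u v x with h | h | h <;> rw [← hZ] at h <;> simp [h]
  have e5 : ∑ x, isingP θ T x * s ^ Z x =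
      ∑ x, (if Z x = 1 then isingP θ T x * s ^ Z x else 0) +
      ∑ x, (if Z x = -1 then isingP θ T x * s ^ Z x else 0) +
      ∑ x, (if Z x = 0 then isingP θ T x * s ^ Z x else 0) := by
    rw [← Finset.sum_add_distrib, ← Finset.sum_add_distrib]
    refine Finset.sum_congr rfl (fun x _ => ?_)
    rcases Zf_cases i j u v x with h | h | h <;> rw [← hZ] at h <;> simp [h]
  have r1 : θ * pr θ T (fun x => Z x = -1) = (1 - θ) * pr θ T (fun x => Z x = 1) := by
    refine pr_ratio θ hT hg.1 _ _ (fun x => ?_) (fun x => ?_)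
    · simp only [hZ, Zf, flip_tog hT x hg.2.1, flip_tog hT x (bridge hT hg.1)]
      split_ifs <;> simp_all
    · simp only [hZ, Zf]
      split_ifs <;> simp_all
  obtain ⟨a, b, hab, hne, hsep⟩ := good_second hT hg
  have r2 := pr_ratio_le h0 h1 hT hab (fun x => Z x ≠ 0) (fun x => ¬ (Z x ≠ 0)) (fun x => by
    simp only [hZ, Zf, flip_tog hT x hsep, flip_keep x (reach_of_edge hg.1 hne.symm)]
    split_ifs <;> simp_all)
  rw [pr_compl θ hT] at r2
  have p1 : pr θ T (fun x => Z x = 1) = θ * N := by rw [e4]; linarith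
  have p2 : pr θ T (fun x => Z x = -1) = (1 - θ) * N := by rw [e4]; linarith
  have q2 : s⁻¹ * pr θ T (fun x => Z x = -1) = θ * s * N := by
    rw [p2, ← hs2]; field_simp
  refine ⟨?_, ?_, e3, ?_, ?_⟩
  · rw [e1, p1]; ring
  · rw [e2, q2]
  · rw [e5, e1, e2, e3, q2, p1]; ring
  · linarith

lemma N_eq {θ : ℝ} {p : ℕ} {T : SimpleGraph (Fin p)} (hT : T.IsTree)
    {m u v : Fin p} (hv : T.Adj m v) :
    pr θ T (fun x => Zf u m u v x ≠ 0) = θ := by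
  have h : ∀ x, Zf u m u v x ≠ 0 ↔ x m ≠ x v := by
    intro x
    simp only [Zf]
    cases x u <;> cases x m <;> cases x v <;> simp
  simp only [h]
  have r := pr_ratio θ hT hv (fun x => x m ≠ x v) (fun x => ¬ (x m ≠ x v)) (fun x => by
    rw [not_not, flip_tog hT x (bridge hT hv)]) (fun x hx => hx)
  rw [pr_compl θ hT] at r
  linarith
end S6

namespace S6
open SimpleGraph

lemma ahat_le {p n : ℕ} (hn : 0 < n) (xs : Fin n → Fin p → Bool) (i j u v : Fin p) :
    AhatSym xs s(i,j) ≤ AhatSym xs s(u,v) ↔ 0 ≤ ∑ k, Zf i j u v (xs k) := by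
  have h : ∀ a b : Fin p, AhatSym xs s(a,b) =
      ((∑ k, (if xs k a = xs k b then 1 else 0 : ℤ) : ℤ) : ℝ) / n := fun a b => by
    change Ahat xs a b = _
    rw [Ahat, Finset.card_filter]
    push_cast
    rfl
  have hn' : (0 : ℝ) < n := by exact_mod_cast hn
  rw [h, h, div_le_div_iff_of_pos_right hn', Int.cast_le]
  simp only [Zf, Finset.sum_sub_distrib, sub_nonneg]

abbrev Bad {p : ℕ} (T : SimpleGraph (Fin p)) (n : ℕ) : Set (Fin n → Fin p → Bool) :=
  {xs | ∃ T' : SimpleGraph (Fin p), T'.IsTree ∧ T'.edgeSet ≠ T.edgeSet ∧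
          ∑ e ∈ T.edgeFinset, AhatSym xs e ≤ ∑ e ∈ T'.edgeFinset, AhatSym xs e}

lemma bad_sub {p n : ℕ} (hn : 0 < n) {T : SimpleGraph (Fin p)} (hT : T.IsTree)
    (xs : Fin n → Fin p → Bool) (h : xs ∈ Bad T n) :
    ∃ i j u v, Good T i j u v ∧ 0 ≤ ∑ k, Zf i j u v (xs k) := by
  obtain ⟨T', hT', hne, hle⟩ := h
  by_contra hcon
  push Not at hcon
  have := mwst hT (AhatSym xs) (fun i j u v hg => by
    have := hcon i j u v hg
    by_contra h
    exact absurd ((ahat_le hn xs i j u v).1 (not_lt.1 h)) (not_le.2 this)) _ T' hT' rfl hne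
  linarith

lemma good_of_two {p : ℕ} {T : SimpleGraph (Fin p)} (hT : T.IsTree) {m u v : Fin p}
    (hu : T.Adj m u) (hv : T.Adj m v) (huv : u ≠ v) : Good T u m u v := by
  have hne : s(u,v) ≠ s(u,m) := by
    intro h
    rw [Sym2.eq_iff] at h
    rcases h with ⟨_, h⟩ | ⟨h, _⟩
    · exact hv.ne h.symm
    · exact hu.ne h.symm
  refine ⟨hu.symm, fun h => ?_, hne⟩
  have hne2 : s(m,v) ≠ s(u,m) := by
    intro h
    rw [Sym2.eq_iff] at h
    rcases h with ⟨h, _⟩ | ⟨_, h⟩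
    · exact hu.ne h
    · exact huv h.symm
  exact bridge hT hu.symm (h.trans (reach_of_edge hv hne2).symm)

lemma sub_bad {p n : ℕ} (hn : 0 < n) {T : SimpleGraph (Fin p)} (hT : T.IsTree) {i j u v : Fin p}
    (hg : Good T i j u v) (xs : Fin n → Fin p → Bool) (h : 0 ≤ ∑ k, Zf i j u v (xs k)) :
    xs ∈ Bad T n := by
  obtain ⟨T', hT', hE, hnm⟩ := exch hT hg.1 hg.2.1
  refine ⟨T', hT', ?_, ?_⟩
  · intro heq
    have h1 : s(u,v) ∈ T'.edgeFinset := by rw [hE]; exact Finset.mem_insert_self _ _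
    rw [mem_edgeFinset, heq] at h1
    apply hnm
    rw [Finset.mem_erase, mem_edgeFinset]
    exact ⟨hg.2.2, h1⟩
  · have := (ahat_le hn xs i j u v).2 h
    have hm : s(i,j) ∈ T.edgeFinset := by rw [mem_edgeFinset]; exact hg.1
    rw [hE, Finset.sum_insert hnm, Finset.sum_erase_eq_sub hm]
    linarith

lemma final_limit (f : ℕ → ℝ) (ρ c C : ℝ) (hρ : 0 < ρ) (hc : 0 < c) (hC : 0 < C)
    (hl : ∀ n : ℕ, 0 < n → c * ρ ^ n ≤ (n + 1) * f n) (hu : ∀ n : ℕ, 0 < n → f n ≤ C * ρ ^ n) :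
    Tendsto (fun n : ℕ => -(1 / (n : ℝ)) * Real.log (f n)) atTop (nhds (-Real.log ρ)) := by
  have hlo : Tendsto (fun n : ℕ => -(Real.log C / (n : ℝ)) + -Real.log ρ) atTop
      (nhds (-0 + -Real.log ρ)) :=
    (tendsto_const_div_atTop_nhds_zero_nat _).neg.add tendsto_const_nhds
  have hlog : Tendsto (fun n : ℕ => Real.log ((n : ℝ) + 1) / (n : ℝ)) atTop (nhds 0) := by
    have h1 : Tendsto (fun x : ℝ => Real.log x / x) atTop (nhds 0) := by
      have := Real.isLittleO_log_id_atTop.tendsto_div_nhds_zero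
      simpa using this
    have h2 : Tendsto (fun n : ℕ => (n : ℝ) + 1) atTop atTop :=
      tendsto_atTop_add_const_right _ _ tendsto_natCast_atTop_atTop
    have h3 := h1.comp h2
    have h4 : Tendsto (fun n : ℕ => 1 + 1 / (n : ℝ)) atTop (nhds (1 + 0)) :=
      tendsto_const_nhds.add (tendsto_const_div_atTop_nhds_zero_nat 1)
    have h5 := h3.mul h4
    rw [zero_mul] at h5
    refine h5.congr' ?_
    filter_upwards [eventually_gt_atTop 0] with n hn
    have : (0 : ℝ) < n := by exact_mod_cast hn
    simp only [Function.comp]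
    field_simp
  have hhi : Tendsto (fun n : ℕ => Real.log ((n : ℝ) + 1) / (n : ℝ) - Real.log c / (n : ℝ)
      + -Real.log ρ) atTop (nhds (0 - 0 + -Real.log ρ)) :=
    (hlog.sub (tendsto_const_div_atTop_nhds_zero_nat _)).add tendsto_const_nhds
  simp only [neg_zero, sub_zero, zero_add] at hlo hhi
  refine tendsto_of_tendsto_of_tendsto_of_le_of_le' hlo hhi ?_ ?_
  all_goals
    filter_upwards [eventually_gt_atTop 0] with n hn
    have hn' : (0 : ℝ) < n := by exact_mod_cast hn
    have h1 := hl n hn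
    have h2 := hu n hn
    have hpos : 0 < c * ρ ^ n := by positivity
    have hf : 0 < f n := by
      by_contra h
      have : ((n : ℝ) + 1) * f n ≤ 0 := mul_nonpos_of_nonneg_of_nonpos (by positivity) (not_lt.1 h)
      linarith
    have l1 := Real.log_le_log hpos h1
    have l2 := Real.log_le_log hf h2
    rw [Real.log_mul hc.ne' (by positivity), Real.log_mul (by positivity) hf.ne', Real.log_pow] at l1
    rw [Real.log_mul hC.ne' (by positivity), Real.log_pow] at l2
  · have : -(Real.log C / (n : ℝ)) + -Real.log ρ = -(1 / (n : ℝ)) * (Real.log C + n * Real.log ρ) := by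
      field_simp
      ring
    rw [this]
    exact mul_le_mul_of_nonpos_left l2 (by simp)
  · have : Real.log ((n : ℝ) + 1) / (n : ℝ) - Real.log c / (n : ℝ) + -Real.log ρ
        = -(1 / (n : ℝ)) * (Real.log c + n * Real.log ρ - Real.log ((n : ℝ) + 1)) := by
      field_simp
      ring
    rw [this]
    exact mul_le_mul_of_nonpos_left (by linarith) (by simp)

theorem main (p : ℕ) (hp : 3 ≤ p) (θ : ℝ) (hθ0 : 0 < θ) (hθ1 : θ < 1 / 2)
    (T : SimpleGraph (Fin p)) (hT : T.IsTree) :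
    Filter.Tendsto (fun n : ℕ => -(1 / (n : ℝ)) * Real.log (iidProb (isingP θ T) n (Bad T n)))
      Filter.atTop
      (nhds (-Real.log (1 - θ * (1 - Real.sqrt (4 * θ * (1 - θ)))))) := by
  set s := Real.sqrt ((1 - θ) / θ) with hs
  have hq : 0 < (1 - θ) / θ := div_pos (by linarith) hθ0
  have hs0 : 0 < s := Real.sqrt_pos.2 hq
  have hs2 : s ^ 2 * θ = 1 - θ := by rw [hs, Real.sq_sqrt hq.le]; field_simp
  have hs1 : 1 ≤ s := by nlinarith
  have hsq : Real.sqrt (4 * θ * (1 - θ)) = 2 * θ * s := by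
    rw [show 4 * θ * (1 - θ) = (2 * θ * s) ^ 2 by rw [← hs2]; ring]
    exact Real.sqrt_sq (by positivity)
  have hle1 : 2 * θ * s ≤ 1 := by
    rw [← hsq, Real.sqrt_le_iff]; constructor <;> nlinarith [sq_nonneg (2 * θ - 1)]
  rw [hsq]
  have hP := ising_pos hθ0 hθ1 T
  have hts : 0 < θ * s := by positivity
  have hρ : 0 < 1 - θ * (1 - 2 * θ * s) := by nlinarith
  refine final_limit _ _ (1 - θ) (p ^ 4) hρ (by linarith) (by positivity) ?_ ?_
  · intro n hn
    obtain ⟨m, u, v, hu, hv, huv⟩ := exists_two hp hT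
    have hg := good_of_two hT hu hv huv
    obtain ⟨a1, a2, a3, a4, -⟩ := mgf hθ0 hθ1 hT hg s hs0 hs2
    rw [N_eq hT hv] at a1 a2 a3 a4
    have := zero_sum_lower (fun x => isingP θ T x * s ^ Zf u m u v x)
      (fun x => mul_nonneg (hP x).le (by positivity)) (Zf u m u v) (Zf_cases u m u v)
      (by rw [a4]; nlinarith) (by rw [a1, a2]) n
    rw [a3, a4, mul_comm (1 - 2 * θ * s)] at this
    refine this.trans ?_
    refine mul_le_mul_of_nonneg_left ?_ (by positivity)
    unfold iidProb
    refine Finset.sum_le_sum (fun xs _ => ?_)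
    have hpp : 0 ≤ ∏ k, isingP θ T (xs k) := Finset.prod_nonneg (fun k _ => (hP _).le)
    split_ifs with h h' h'
    · rw [Finset.prod_mul_distrib, prod_zpow' s hs0.ne', h]; simp
    · exact absurd (sub_bad hn hT hg xs h.ge) h'
    · exact hpp
    · exact le_rfl
  · intro n hn
    have step : iidProb (isingP θ T) n (Bad T n) ≤
        ∑ t : Fin p × Fin p × Fin p × Fin p, ∑ xs : Fin n → Fin p → Bool,
          if Good T t.1 t.2.1 t.2.2.1 t.2.2.2 ∧ 0 ≤ ∑ k, Zf t.1 t.2.1 t.2.2.1 t.2.2.2 (xs k)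
          then ∏ k, isingP θ T (xs k) else 0 := by
      rw [Finset.sum_comm]
      unfold iidProb
      refine Finset.sum_le_sum (fun xs _ => ?_)
      have hpp : 0 ≤ ∏ k, isingP θ T (xs k) := Finset.prod_nonneg (fun k _ => (hP _).le)
      have hnn : ∀ t ∈ (Finset.univ : Finset (Fin p × Fin p × Fin p × Fin p)),
          (0 : ℝ) ≤ if Good T t.1 t.2.1 t.2.2.1 t.2.2.2 ∧
            0 ≤ ∑ k, Zf t.1 t.2.1 t.2.2.1 t.2.2.2 (xs k)
          then ∏ k, isingP θ T (xs k) else 0 := fun t _ => by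
        split_ifs
        exacts [hpp, le_rfl]
      split_ifs with h
      · obtain ⟨i, j, u, v, hg⟩ := bad_sub hn hT xs h
        refine le_trans ?_ (Finset.single_le_sum hnn (Finset.mem_univ (i, j, u, v)))
        simp only [hg, and_self, if_true, le_refl]
      · exact Finset.sum_nonneg hnn
    refine step.trans ?_
    have hb : ∀ t ∈ (Finset.univ : Finset (Fin p × Fin p × Fin p × Fin p)),
        (∑ xs : Fin n → Fin p → Bool,
          if Good T t.1 t.2.1 t.2.2.1 t.2.2.2 ∧ 0 ≤ ∑ k, Zf t.1 t.2.1 t.2.2.1 t.2.2.2 (xs k)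
          then ∏ k, isingP θ T (xs k) else 0) ≤ (1 - θ * (1 - 2 * θ * s)) ^ n := by
      rintro ⟨i, j, u, v⟩ -
      by_cases hg : Good T i j u v
      · simp only [hg, true_and]
        refine (chernoff (isingP θ T) (fun x => (hP x).le) (Zf i j u v) s hs1 n).trans ?_
        obtain ⟨-, -, -, a4, a5⟩ := mgf hθ0 hθ1 hT hg s hs0 hs2
        refine pow_le_pow_left₀ (Finset.sum_nonneg
          (fun x _ => mul_nonneg (hP x).le (by positivity))) ?_ n
        rw [a4]
        nlinarith
      · simp only [hg, false_and, if_false, Finset.sum_const_zero]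
        positivity
    refine (Finset.sum_le_card_nsmul _ _ _ hb).trans (le_of_eq ?_)
    simp only [Finset.card_univ, Fintype.card_prod, Fintype.card_fin, nsmul_eq_mul]
    push_cast
    ring
end S6

/-- the error exponent of the event that the true tree `T` fails to be the
unique maximum-weight spanning tree for the empirical weights `Â` equals
`-log(1 - θ(1 - √(4θ(1-θ))))`, independently of `p` and of the structure of `T`. -/
theorem stmt6 (p : ℕ) (hp : 3 ≤ p) (θ : ℝ) (hθ0 : 0 < θ) (hθ1 : θ < 1 / 2)
    (T : SimpleGraph (Fin p)) (hT : T.IsTree) :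
    Filter.Tendsto (fun n : ℕ =>
      -(1 / (n : ℝ)) * Real.log (iidProb (isingP θ T) n
        {xs | ∃ T' : SimpleGraph (Fin p), T'.IsTree ∧ T'.edgeSet ≠ T.edgeSet ∧
          ∑ e ∈ T.edgeFinset, AhatSym xs e ≤ ∑ e ∈ T'.edgeFinset, AhatSym xs e}))
      Filter.atTop
      (nhds (-Real.log (1 - θ * (1 - Real.sqrt (4 * θ * (1 - θ)))))) := by
  exact S6.main p hp θ hθ0 hθ1 T hT
end

section
/- For every θ ∈ (0, 1/2), the Bresler–Karzand exponent K^{BK}(θ) := θ·(1−2θ)²/8 satisfies K^{BK}(θ) < K(θ)/3, where K(θ) := −log(1 − θ·(1 − √(4θ(1−θ)))). -/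
open scoped Classical BigOperators
open Filter

/-- the Bresler-Karzand exponent is strictly less than a third of the
true error exponent. -/
theorem stmt8 (θ : ℝ) (hθ0 : 0 < θ) (hθ1 : θ < 1 / 2) :
    θ * (1 - 2 * θ) ^ 2 / 8
      < (-Real.log (1 - θ * (1 - Real.sqrt (4 * θ * (1 - θ))))) / 3 := by
  have hs0 : 0 ≤ Real.sqrt (4 * θ * (1 - θ)) := Real.sqrt_nonneg _
  have hsq : Real.sqrt (4 * θ * (1 - θ)) ^ 2 = 4 * θ * (1 - θ) :=
    Real.sq_sqrt (by nlinarith)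
  generalize Real.sqrt (4 * θ * (1 - θ)) = s at *
  have hpos : 0 < (1 - 2 * θ) ^ 2 := by
    have : 0 < 1 - 2 * θ := by linarith
    positivity
  have hs1 : s < 1 := by nlinarith
  have hx : 0 < θ * (1 - s) := mul_pos hθ0 (by linarith)
  have hlog := Real.log_le_sub_one_of_pos (x := 1 - θ * (1 - s)) (by nlinarith)
  have h2 : θ * (1 - 2 * θ) ^ 2 = θ * (1 - s) * (1 + s) := by
    linear_combination θ * hsq
  rw [h2]
  nlinarith
end

section
/- Let θ ∈ (0, 1/2), let P = P_{T,θ} on {0,1}³ for the tree T with edge set {{1,2},{2,3}}, and let x_1,…,x_n be i.i.d. samples from P. Define K(θ) := −log(1 − θ·(1 − √(4θ(1−θ)))), σ² := θ·√(4θ(1−θ))·e^{K(θ)}, and f̃(n) := (e^{−n·K(θ)}/√(2πσ²n))·[1 + (1−3σ²)/(8σ²n)]. Then ℙ(Â_{1,3} = Â_{1,2}) = f̃(n)·(1 + o(n^{−1})); that is, n·( ℙ(Â_{1,3} = Â_{1,2}) / f̃(n) − 1 ) → 0 as n → ∞. -/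
open scoped Classical BigOperators
open Filter

namespace Tie

def D (x : Fin 3 → Bool) : ℤ :=
  (if x 0 = x 2 then 1 else 0) - (if x 0 = x 1 then 1 else 0)

lemma edges : chainA.edgeFinset = {s(0,1), s(1,2)} := by
  ext e
  rw [SimpleGraph.mem_edgeFinset]
  simp only [chainA, SimpleGraph.edgeSet_fromEdgeSet]
  constructor
  · rintro ⟨h, -⟩
    simpa using h
  · intro h
    refine ⟨by simpa using h, ?_⟩
    intro hd
    simp at h
    rcases h with rfl | rfl <;> simp at hd

def e3 : Bool × Bool × Bool ≃ (Fin 3 → Bool) where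
  toFun p := ![p.1, p.2.1, p.2.2]
  invFun x := (x 0, x 1, x 2)
  left_inv p := by simp
  right_inv x := by ext i; fin_cases i <;> rfl

lemma isingP_eq (θ : ℝ) (x : Fin 3 → Bool) : isingP θ chainA x =
    (1/2) * ((if x 0 = x 1 then 1 - θ else θ) * (if x 1 = x 2 then 1 - θ else θ)) := by
  unfold isingP
  rw [edges, Finset.prod_pair (by simp)]
  simp [pairWeight]

lemma ahat_iff {n : ℕ} (hn : 0 < n) (xs : Fin n → Fin 3 → Bool) :
    Ahat xs 0 2 = Ahat xs 0 1 ↔ ∑ k, D (xs k) = 0 := by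
  have hn' : (n : ℝ) ≠ 0 := by positivity
  unfold Ahat
  rw [div_left_inj' hn', Nat.cast_inj]
  simp only [D, Finset.sum_sub_distrib, sub_eq_zero, Finset.sum_boole]
  norm_cast

lemma int_exp (m : ℤ) : ∫ t in (-Real.pi)..Real.pi, Complex.exp ((m * Complex.I) * t)
    = if m = 0 then (2 * Real.pi : ℂ) else 0 := by
  split_ifs with h
  · subst h; simp; ring
  · have hc : (m * Complex.I : ℂ) ≠ 0 := by simp [h]
    rw [integral_exp_mul_complex hc, div_eq_zero_iff]
    left
    rw [sub_eq_zero, Complex.exp_eq_exp_iff_exists_int]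
    exact ⟨m, by push_cast; ring⟩

lemma char_sum (θ : ℝ) (hθ0 : 0 < θ) (hθ1 : θ < 1 / 2) (t : ℝ) :
    ∑ x : Fin 3 → Bool, (isingP θ chainA x : ℂ) * ((Real.sqrt ((1-θ)/θ) : ℝ) : ℂ) ^ (D x)
      * Complex.exp ((D x * Complex.I) * t)
    = ((1 - θ + θ * Real.sqrt (4 * θ * (1 - θ)) * Real.cos t : ℝ) : ℂ) := by
  have hz : Real.sqrt ((1-θ)/θ) ≠ 0 := by
    have : 0 < (1-θ)/θ := div_pos (by linarith) hθ0
    positivity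
  set z := Real.sqrt ((1-θ)/θ) with hzd
  have h1 : θ ^ 2 * z = θ * Real.sqrt (4 * θ * (1 - θ)) / 2 := by
    have : Real.sqrt (4 * θ * (1 - θ)) = 2 * θ * z := by
      rw [Real.sqrt_eq_iff_mul_self_eq (by nlinarith) (by positivity)]
      symm
      have : z * z = (1-θ)/θ := Real.mul_self_sqrt (div_nonneg (by linarith) hθ0.le)
      calc 2 * θ * z * (2 * θ * z) = 4 * θ^2 * (z * z) := by ring
        _ = _ := by rw [this]; field_simp
    rw [this]; ring
  have h2 : θ * (1-θ) * z⁻¹ = θ * Real.sqrt (4 * θ * (1 - θ)) / 2 := by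
    rw [← h1]
    have : z * z = (1-θ)/θ := Real.mul_self_sqrt (div_nonneg (by linarith) hθ0.le)
    field_simp
    rw [pow_two, this]; field_simp
  have key : ∑ x : Fin 3 → Bool, (isingP θ chainA x : ℂ) * (z : ℂ) ^ (D x)
      * Complex.exp ((D x * Complex.I) * t) = (1 - θ : ℝ) +
      ((θ^2 * z : ℝ) : ℂ) * Complex.exp (t * Complex.I) +
      ((θ*(1-θ) * z⁻¹ : ℝ) : ℂ) * Complex.exp (-t * Complex.I) := by
    rw [← e3.sum_comp, Fintype.sum_prod_type]
    simp_rw [Fintype.sum_prod_type]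
    simp [isingP_eq, D, e3]
    ring_nf
  rw [key, h1, h2]
  rw [Complex.exp_mul_I, Complex.exp_mul_I]
  push_cast
  simp
  ring

lemma tie_integral (θ : ℝ) (hθ0 : 0 < θ) (hθ1 : θ < 1 / 2) (n : ℕ) (hn : 0 < n) :
    iidProb (isingP θ chainA) n {xs | Ahat xs 0 2 = Ahat xs 0 1} * (2 * Real.pi) =
    ∫ t in (-Real.pi)..Real.pi, (1 - θ + θ * Real.sqrt (4 * θ * (1 - θ)) * Real.cos t) ^ n := by
  have hz : Real.sqrt ((1-θ)/θ) ≠ 0 := by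
    have : 0 < (1-θ)/θ := div_pos (by linarith) hθ0
    positivity
  apply Complex.ofReal_injective
  rw [← intervalIntegral.integral_ofReal]
  simp_rw [Complex.ofReal_pow, ← char_sum θ hθ0 hθ1, Fintype.sum_pow]
  rw [intervalIntegral.integral_finsetSum]
  · unfold iidProb
    push_cast
    rw [Finset.sum_mul]
    refine Finset.sum_congr rfl fun xs _ => ?_
    have : ∀ t : ℝ, ∏ i : Fin n, ((isingP θ chainA (xs i) : ℂ) * ((Real.sqrt ((1-θ)/θ) : ℝ) : ℂ) ^ (D (xs i))
      * Complex.exp ((D (xs i) * Complex.I) * t)) =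
      (∏ i : Fin n, (isingP θ chainA (xs i) : ℂ)) * ((Real.sqrt ((1-θ)/θ) : ℝ) : ℂ) ^ (∑ i, D (xs i)) *
        Complex.exp (((∑ i, D (xs i) : ℤ) * Complex.I) * t) := by
      intro t
      rw [Finset.prod_mul_distrib, Finset.prod_mul_distrib, ← Complex.exp_sum]
      congr 2
      · have hz' : ((Real.sqrt ((1-θ)/θ) : ℝ) : ℂ) ≠ 0 := by exact_mod_cast hz
        induction (Finset.univ : Finset (Fin n)) using Finset.induction_on with
        | empty => simp
        | insert a s ha ih => rw [Finset.prod_insert ha, Finset.sum_insert ha, zpow_add₀ hz', ih]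
      · push_cast
        rw [Finset.sum_mul, Finset.sum_mul]
    simp_rw [this]
    rw [intervalIntegral.integral_const_mul, int_exp]
    simp only [Set.mem_ofPred_eq, ahat_iff hn]
    split_ifs with h
    · rw [h]; simp
    · simp
  · intro i _
    apply Continuous.intervalIntegrable
    fun_prop
end Tie
namespace Tie
open MeasureTheory

noncomputable def fa (v y : ℝ) : ℝ := 1 - v * (1 - Real.cos y)
noncomputable def fb (v y : ℝ) : ℝ := Real.exp (-(v * y ^ 2 / 2))

lemma ab_bound {v : ℝ} (h0 : 0 < v) (h1 : v < 1/2) (y : ℝ) : |fa v y - fb v y| ≤ 4 * y ^ 4 := by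
  have hc : |Real.cos y - (1 - y^2/2)| ≤ 3 * y^4 := by
    rcases le_or_gt |y| 1 with h | h
    · refine (Real.cos_bound h).trans ?_
      have : |y|^4 = y^4 := by rw [pow_abs, abs_of_nonneg (by positivity)]
      rw [this]; nlinarith [show 0 ≤ y^4 by positivity]
    · have h2 : 1 ≤ y^2 := by rw [← sq_abs]; nlinarith
      have := Real.cos_le_one y
      have := Real.neg_one_le_cos y
      rw [abs_le]; constructor <;> nlinarith
  have he : |fb v y - (1 - v*y^2/2)| ≤ (v*y^2/2)^2 := by
    unfold fb
    set u := v*y^2/2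
    have hu : 0 ≤ u := by positivity
    rcases le_or_gt u 1 with h | h
    · have := Real.abs_exp_sub_one_sub_id_le (x := -u) (by rw [abs_neg, abs_of_nonneg hu]; exact h)
      rw [neg_sq] at this
      convert this using 2; ring
    · have := Real.exp_pos (-u)
      have : Real.exp (-u) ≤ 1 := Real.exp_le_one_iff.mpr (by linarith)
      rw [abs_le]; constructor <;> nlinarith
  have e : fa v y - fb v y = v * (Real.cos y - (1 - y^2/2)) - (fb v y - (1 - v*y^2/2)) := by
    unfold fa; ring
  rw [e]
  refine (abs_sub _ _).trans ?_
  rw [abs_mul, abs_of_pos h0]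
  have h4 : 0 ≤ y^4 := by positivity
  have : v * |Real.cos y - (1 - y^2/2)| ≤ 1 * (3 * y^4) := mul_le_mul (by linarith) hc (abs_nonneg _) (by norm_num)
  have : (v*y^2/2)^2 ≤ y^4 := by
    have : (v*y^2/2)^2 = v^2/4 * y^4 := by ring
    rw [this]; nlinarith [mul_nonneg h0.le h4]
  linarith

lemma fa_nonneg {v : ℝ} (h0 : 0 < v) (h1 : v < 1/2) (y : ℝ) : 0 ≤ fa v y := by
  unfold fa
  nlinarith [Real.neg_one_le_cos y, Real.cos_le_one y]

lemma fa_le {v : ℝ} (h0 : 0 < v) {y : ℝ} (hy : |y| ≤ Real.pi) :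
    fa v y ≤ Real.exp (-(2 * v / Real.pi ^ 2 * y ^ 2)) := by
  have := Real.cos_le_one_sub_mul_cos_sq hy
  have h2 := Real.add_one_le_exp (-(2 * v / Real.pi ^ 2 * y ^ 2))
  have : v * (2 / Real.pi ^ 2 * y ^ 2) ≤ v * (1 - Real.cos y) :=
    mul_le_mul_of_nonneg_left (by linarith) h0.le
  have e : v * (2 / Real.pi ^ 2 * y ^ 2) = 2 * v / Real.pi ^ 2 * y ^ 2 := by ring
  unfold fa; linarith

lemma cc_le {v : ℝ} (h0 : 0 < v) : 2 * v / Real.pi ^ 2 ≤ v / 2 := by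
  have := Real.pi_gt_three
  rw [div_le_div_iff₀ (by positivity) (by norm_num)]
  nlinarith [mul_pos h0 (show (0:ℝ) < Real.pi^2 - 9 by nlinarith)]

lemma fb_le {v : ℝ} (h0 : 0 < v) (y : ℝ) :
    fb v y ≤ Real.exp (-(2 * v / Real.pi ^ 2 * y ^ 2)) := by
  unfold fb
  apply Real.exp_le_exp.mpr
  have := mul_le_mul_of_nonneg_right (cc_le h0) (sq_nonneg y)
  linarith

lemma ab_expand {v : ℝ} (h0 : 0 < v) (h1 : v < 1/2) {y : ℝ} (hy : |y| ≤ 1) :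
    |fa v y - fb v y - (v/24 - v^2/8) * y^4| ≤ y ^ 6 := by
  have hy2 : y^2 ≤ 1 := by rw [← sq_abs]; nlinarith [abs_nonneg y]
  have h6 : 0 ≤ y^6 := by positivity
  obtain ⟨h, rfl⟩ : ∃ h, y = 2 * h := ⟨y/2, by ring⟩
  have hh2 : h^2 ≤ 1/4 := by nlinarith
  have hh : |h| ≤ 1/2 := by rw [abs_mul, abs_two] at hy; linarith
  have hs := Real.sin_bound (x := h) (by linarith)
  set r := Real.sin h - (h - h^3/6) with hr
  have hcos : Real.cos (2*h) = 1 - 2 * Real.sin h ^2 := by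
    rw [Real.cos_two_mul, Real.cos_sq']; ring
  have hsin : Real.sin h = h - h^3/6 + r := by rw [hr]; ring
  have e1 : Real.cos (2*h) - (1 - (2*h)^2/2 + (2*h)^4/24) =
      -2 * (h^6/36 + 2*(1 - h^2/6) * (h * r) + r * r) := by
    rw [hcos, hsin]; ring
  have hh6 : 0 ≤ h^6 := by positivity
  have a6 : |h|^6 = h^6 := by rw [pow_abs, abs_of_nonneg hh6]
  have b1 : |h * r| ≤ h^6/100 := by
    rw [abs_mul, ← a6]
    calc |h| * |r| ≤ |h| * (|h|^5/100) := by gcongr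
      _ = _ := by ring
  have b2 : |r * r| ≤ h^6/100 := by
    rw [abs_mul, ← a6]
    have : |r| ≤ |h| := by
      refine hs.trans ?_
      have : |h|^4 ≤ 1 := pow_le_one₀ (abs_nonneg _) (by linarith)
      calc |h|^5/100 = |h| * (|h|^4/100) := by ring
        _ ≤ |h| * 1 := by gcongr; linarith
        _ = _ := by ring
    calc |r| * |r| ≤ |h| * (|h|^5/100) := by gcongr
      _ = _ := by ring
  have b3 : |Real.cos (2*h) - (1 - (2*h)^2/2 + (2*h)^4/24)| ≤ h^6 := by
    rw [e1]
    rw [abs_le] at b1 b2 ⊢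
    constructor <;> nlinarith [sq_nonneg h]
  have hu : |-(v * (2*h)^2/2)| ≤ 1 := by
    rw [abs_neg, abs_of_nonneg (by positivity)]; nlinarith
  have hexp := Real.exp_bound hu (n := 3) (by norm_num)
  have b4 : |fb v (2*h) - (1 - v*(2*h)^2/2 + (v*(2*h)^2/2)^2/2)| ≤ h^6 := by
    unfold fb
    simp only [Finset.sum_range_succ, Finset.sum_range_zero] at hexp
    norm_num [Nat.factorial] at hexp
    have e3 : |v * (2*h)^2/2|^3 = 8 * v^3 * h^6 := by
      rw [abs_of_nonneg (by positivity)]; ring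
    rw [e3] at hexp
    have hv3 : v^3 ≤ 1/8 := by
      calc v^3 ≤ (1/2)^3 := by gcongr
        _ = _ := by norm_num
    calc _ ≤ 8 * v^3 * h^6 * (2/9) := by
            convert hexp using 2
            ring
      _ ≤ h^6 := by nlinarith [mul_le_mul_of_nonneg_right hv3 hh6]
  have e : fa v (2*h) - fb v (2*h) - (v/24 - v^2/8) * (2*h)^4 =
     v * (Real.cos (2*h) - (1 - (2*h)^2/2 + (2*h)^4/24)) - (fb v (2*h) - (1 - v*(2*h)^2/2 + (v*(2*h)^2/2)^2/2)) := by
    unfold fa; ring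
  rw [e]
  refine (abs_sub _ _).trans ?_
  rw [abs_mul, abs_of_pos h0]
  have : v * |Real.cos (2*h) - (1 - (2*h)^2/2 + (2*h)^4/24)| ≤ 1 * h^6 :=
    mul_le_mul (by linarith) b3 (abs_nonneg _) (by norm_num)
  nlinarith

lemma tendsto_y (x : ℝ) : Tendsto (fun n : ℕ => x / √(n:ℝ)) atTop (nhds 0) :=
  Tendsto.div_atTop tendsto_const_nhds (Real.tendsto_sqrt_atTop.comp tendsto_natCast_atTop_atTop)

lemma tendsto_n2 {v : ℝ} (h0 : 0 < v) (h1 : v < 1/2) (x : ℝ) :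
    Tendsto (fun n : ℕ => (n:ℝ)^2 * (fa v (x/√n) - fb v (x/√n))) atTop
      (nhds ((v/24 - v^2/8) * x^4)) := by
  rw [tendsto_iff_dist_tendsto_zero]
  have hz : Tendsto (fun n : ℕ => x^6 / (n:ℝ)) atTop (nhds 0) :=
    Tendsto.div_atTop tendsto_const_nhds tendsto_natCast_atTop_atTop
  refine squeeze_zero' (Eventually.of_forall fun _ => dist_nonneg) ?_ hz
  have hy := (tendsto_y x).abs
  rw [abs_zero] at hy
  filter_upwards [eventually_gt_atTop 0, hy.eventually (ge_mem_nhds one_pos)] with n hn hy1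
  have hn' : (0:ℝ) < n := by exact_mod_cast hn
  have hs : √(n:ℝ)^2 = n := Real.sq_sqrt hn'.le
  have := ab_expand h0 h1 hy1
  have h4 : √(n:ℝ)^4 = n^2 := by rw [show 4 = 2*2 from rfl, pow_mul, hs]
  have h6 : √(n:ℝ)^6 = n^3 := by rw [show 6 = 2*3 from rfl, pow_mul, hs]
  rw [div_pow, div_pow, h4, h6] at this
  rw [Real.dist_eq]
  calc _ = |(n:ℝ)^2 * (fa v (x/√n) - fb v (x/√n) - (v/24 - v^2/8) * (x^4/n^2))| := by
        congr 1; field_simp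
    _ = (n:ℝ)^2 * |fa v (x/√n) - fb v (x/√n) - (v/24 - v^2/8) * (x^4/n^2)| := by
        rw [abs_mul, abs_of_pos (by positivity)]
    _ ≤ (n:ℝ)^2 * (x^6/n^3) := by gcongr
    _ = _ := by field_simp

lemma fb_pow {v x : ℝ} {n : ℕ} (hn : 0 < n) : fb v (x/√n) ^ n = Real.exp (-(v/2) * x^2) := by
  have hn' : (0:ℝ) < n := by exact_mod_cast hn
  unfold fb
  rw [← Real.exp_nat_mul, div_pow, Real.sq_sqrt hn'.le]
  congr 1; field_simp

lemma pow_lim {g : ℕ → ℝ} {L : ℝ} (hg : ∀ n, 0 ≤ 1 + g n)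
    (h : Tendsto (fun n : ℕ => (n:ℝ)^2 * g n) atTop (nhds L)) :
    Tendsto (fun n : ℕ => (n:ℝ) * ((1 + g n)^n - 1)) atTop (nhds L) := by
  have hinv : Tendsto (fun n : ℕ => (n:ℝ)⁻¹) atTop (nhds 0) := tendsto_inv_atTop_nhds_zero_nat
  have hup : Tendsto (fun n : ℕ => (n:ℝ)^2 * g n + ((n:ℝ)^2 * g n)^2 * (n:ℝ)⁻¹) atTop (nhds L) := by
    simpa using h.add ((h.pow 2).mul hinv)
  have hw : Tendsto (fun n : ℕ => |(n:ℝ) * g n|) atTop (nhds 0) := by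
    have := (h.mul hinv).abs
    rw [mul_zero, abs_zero] at this
    refine this.congr' ?_
    filter_upwards [eventually_gt_atTop 0] with n hn
    have hn' : (0:ℝ) < n := by exact_mod_cast hn
    congr 1; field_simp
  refine tendsto_of_tendsto_of_tendsto_of_le_of_le' h hup ?_ ?_
  · refine Eventually.of_forall fun n => ?_
    have := one_add_mul_le_pow (a := g n) (by linarith [hg n]) n
    have : (n:ℝ) * (n * g n) ≤ n * ((1 + g n)^n - 1) := by gcongr; linarith
    linarith
  · filter_upwards [eventually_gt_atTop 0, hw.eventually (ge_mem_nhds one_pos)] with n hn hw1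
    have hn' : (0:ℝ) < n := by exact_mod_cast hn
    have h1 : (1 + g n)^n ≤ Real.exp (n * g n) := by
      rw [Real.exp_nat_mul]
      apply pow_le_pow_left₀ (hg n)
      linarith [Real.add_one_le_exp (g n)]
    have h2 := (abs_le.mp (Real.abs_exp_sub_one_sub_id_le hw1)).2
    calc (n:ℝ) * ((1 + g n)^n - 1) ≤ n * (n * g n + (n * g n)^2) := by gcongr; linarith
      _ = _ := by field_simp

lemma pointwise {v : ℝ} (h0 : 0 < v) (h1 : v < 1/2) (x : ℝ) :
    Tendsto (fun n : ℕ => (n:ℝ) * (fa v (x/√n) ^ n - Real.exp (-(v/2) * x^2))) atTop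
      (nhds ((v/24 - v^2/8) * x^4 * Real.exp (-(v/2) * x^2))) := by
  have hbpos : ∀ y, 0 < fb v y := fun y => Real.exp_pos _
  have hb : Tendsto (fun n : ℕ => fb v (x/√n)) atTop (nhds 1) := by
    have hc : Continuous (fb v) := by unfold fb; fun_prop
    have := (hc.tendsto 0).comp (tendsto_y x)
    have e : fb v 0 = 1 := by simp [fb]
    rw [e] at this
    exact this
  have key := pow_lim (g := fun n : ℕ => fa v (x/√n) / fb v (x/√n) - 1) (L := (v/24 - v^2/8) * x^4)
    (fun n => by
      have := div_nonneg (fa_nonneg h0 h1 (x/√n)) (hbpos (x/√n)).le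
      simpa using this)
    (by
      have := (tendsto_n2 h0 h1 x).div hb one_ne_zero
      rw [div_one] at this
      refine this.congr fun n => ?_
      have := (hbpos (x/√n)).ne'
      simp only [Pi.div_apply]
      field_simp)
  refine (key.mul_const (Real.exp (-(v/2) * x^2))).congr' ?_
  filter_upwards [eventually_gt_atTop 0] with n hn
  have := (hbpos (x/√n)).ne'
  rw [← fb_pow hn, add_sub_cancel, div_pow]
  field_simp

lemma inside_bound {v : ℝ} (h0 : 0 < v) (h1 : v < 1/2) {n : ℕ} (hn : 2 ≤ n) {x : ℝ}
    (hx : |x/√n| ≤ Real.pi) :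
    |(n:ℝ) * (fa v (x/√n) ^ n - Real.exp (-(v/2) * x^2))| ≤
      4 * x^4 * Real.exp (-(v/Real.pi^2) * x^2) := by
  have hn' : (2:ℝ) ≤ n := by exact_mod_cast hn
  have hs : √(n:ℝ)^2 = n := Real.sq_sqrt (by linarith)
  rw [← fb_pow (show 0 < n by omega), abs_mul, abs_of_nonneg (by linarith : (0:ℝ) ≤ n)]
  have hp := abs_pow_sub_pow_le (fa v (x/√n)) (fb v (x/√n)) n
  set y := x/√n with hy
  have hxy : x^2 = n * y^2 := by rw [hy, div_pow, hs]; field_simp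
  have hM : max |fa v y| |fb v y| ≤ Real.exp (-(2 * v / Real.pi ^ 2 * y ^ 2)) := by
    rw [abs_of_nonneg (fa_nonneg h0 h1 y), abs_of_nonneg (show 0 ≤ fb v y from (Real.exp_pos _).le)]
    exact max_le (fa_le h0 hx) (fb_le h0 y)
  have hM2 : max |fa v y| |fb v y| ^ (n-1) ≤ Real.exp (-(v/Real.pi^2) * x^2) := by
    refine (pow_le_pow_left₀ (le_max_of_le_left (abs_nonneg _)) hM _).trans ?_
    rw [← Real.exp_nat_mul, Nat.cast_sub (by omega), hxy]
    apply Real.exp_le_exp.mpr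
    have : 0 ≤ v / Real.pi^2 * y^2 := by positivity
    have e : 2 * v / Real.pi ^ 2 * y ^ 2 = 2 * (v / Real.pi^2 * y^2) := by ring
    rw [e]
    push_cast
    nlinarith
  calc (n:ℝ) * |fa v y ^ n - fb v y ^ n|
      ≤ n * ((4 * y^4) * n * Real.exp (-(v/Real.pi^2) * x^2)) := by
        gcongr
        refine hp.trans ?_
        gcongr
        exact ab_bound h0 h1 y
    _ = 4 * (n * y^2)^2 * Real.exp (-(v/Real.pi^2) * x^2) := by ring
    _ = _ := by rw [← hxy]; ring

lemma outside_bound {v : ℝ} (h0 : 0 < v) {n : ℕ} (hn : 0 < n) {x : ℝ}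
    (hx : Real.pi ≤ |x/√n|) :
    |(n:ℝ) * (0 - Real.exp (-(v/2) * x^2))| ≤ x^2 * Real.exp (-(v/Real.pi^2) * x^2) := by
  have hn' : (0:ℝ) < n := by exact_mod_cast hn
  rw [zero_sub, mul_neg, abs_neg, abs_of_nonneg (by positivity)]
  have hs : √(n:ℝ)^2 = n := Real.sq_sqrt (by linarith)
  have h3 := Real.pi_gt_three
  have hnx : (n:ℝ) ≤ x^2 := by
    have : 1 ≤ (x/√n)^2 := by rw [← sq_abs]; nlinarith
    rw [div_pow, hs, le_div_iff₀ hn'] at this; linarith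
  have hcl : v / Real.pi^2 ≤ v/2 := by
    have := cc_le h0
    have e : 2 * v / Real.pi^2 = 2 * (v/Real.pi^2) := by ring
    have : 0 < v / Real.pi^2 := by positivity
    linarith
  have he : Real.exp (-(v/2) * x^2) ≤ Real.exp (-(v/Real.pi^2) * x^2) := by
    apply Real.exp_le_exp.mpr
    nlinarith [mul_le_mul_of_nonneg_right hcl (sq_nonneg x)]
  exact mul_le_mul hnx he (Real.exp_pos _).le (sq_nonneg x)

lemma integrable_pow_gauss {b : ℝ} (hb : 0 < b) (k : ℕ) :
    Integrable (fun x : ℝ => x^k * Real.exp (-b * x^2)) := by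
  have := integrable_rpow_mul_exp_neg_mul_sq hb (s := k) (by have : (0:ℝ) ≤ k := by positivity
                                                             linarith)
  simpa using this

lemma gauss4 {b : ℝ} (hb : 0 < b) :
    ∫ x : ℝ, x^4 * Real.exp (-b * x^2) = 3 / (4 * b^2) * √(Real.pi / b) := by
  have h := integral_comp_abs (f := fun x : ℝ => x^4 * Real.exp (-b * x^2))
  have e : ∀ x : ℝ, |x|^4 * Real.exp (-b * |x|^2) = x^4 * Real.exp (-b * x^2) := by
    intro x
    rw [sq_abs, pow_abs, abs_of_nonneg (by positivity)]
  simp only [e] at h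
  rw [h]
  have := integral_rpow_mul_exp_neg_mul_rpow (p := 2) (q := 4) (b := b) (by norm_num) (by norm_num) hb
  simp only [Real.rpow_ofNat] at this
  rw [this, show -((4:ℝ)+1)/2 = -(5/2) by norm_num, show ((4:ℝ)+1)/2 = 5/2 by norm_num]
  have g : Real.Gamma (5/2) = 3/4 * √Real.pi := by
    rw [show (5/2:ℝ) = 3/2 + 1 by norm_num, Real.Gamma_add_one (by norm_num),
      show (3/2:ℝ) = 1/2 + 1 by norm_num, Real.Gamma_add_one (by norm_num), Real.Gamma_one_half_eq]
    ring
  rw [g]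
  have hp : b ^ (-(5/2) : ℝ) = (b^2)⁻¹ * (√b)⁻¹ := by
    rw [show (-(5/2) : ℝ) = -2 + -(1/2) by norm_num, Real.rpow_add hb, Real.rpow_neg hb.le,
      Real.rpow_neg hb.le, Real.sqrt_eq_rpow]
    norm_cast
  rw [hp, Real.sqrt_div' _ hb.le]
  field_simp

noncomputable def G (v : ℝ) (n : ℕ) (x : ℝ) : ℝ :=
  (Set.Ioc (-Real.pi * √(n:ℝ)) (Real.pi * √n)).indicator (fun x => fa v (x/√n) ^ n) x

lemma integrable_G (v : ℝ) (n : ℕ) : Integrable (G v n) := by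
  unfold G
  rw [integrable_indicator_iff measurableSet_Ioc]
  have : Continuous (fun x => fa v (x/√n) ^ n) := by unfold fa; fun_prop
  exact this.integrableOn_Ioc

lemma integral_G (v : ℝ) {n : ℕ} (hn : 0 < n) :
    ∫ x, G v n x = √n * ∫ t in (-Real.pi)..Real.pi, fa v t ^ n := by
  have hn' : (0:ℝ) < √n := by positivity
  unfold G
  rw [integral_indicator measurableSet_Ioc, ← intervalIntegral.integral_of_le,
    intervalIntegral.integral_comp_div (fun y => fa v y ^ n) hn'.ne', smul_eq_mul]
  · rw [mul_div_assoc, mul_div_assoc, div_self hn'.ne', mul_one, mul_one]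
  · have := Real.pi_pos
    nlinarith [mul_pos this hn']

lemma main_tendsto {v : ℝ} (h0 : 0 < v) (h1 : v < 1/2) :
    Tendsto (fun n : ℕ => (n:ℝ) * (√n * (∫ t in (-Real.pi)..Real.pi, fa v t ^ n) - √(2 * Real.pi / v)))
      atTop (nhds ((1 - 3 * v) / (8 * v) * √(2 * Real.pi / v))) := by
  have hpi := Real.pi_pos
  have hv2 : 0 < v/2 := by positivity
  have hcc : 0 < v/Real.pi^2 := by positivity
  have e2 : Real.pi / (v/2) = 2 * Real.pi / v := by field_simp
  have hB : Integrable (fun x : ℝ => Real.exp (-(v/2) * x^2)) := integrable_exp_neg_mul_sq hv2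
  have lim := tendsto_integral_filter_of_dominated_convergence (μ := (volume : Measure ℝ)) (l := atTop)
    (F := fun (n:ℕ) x => (n:ℝ) * (G v n x - Real.exp (-(v/2) * x^2)))
    (f := fun x => (v/24 - v^2/8) * x^4 * Real.exp (-(v/2) * x^2))
    (fun x => 4 * (x^4 * Real.exp (-(v/Real.pi^2) * x^2)) + x^2 * Real.exp (-(v/Real.pi^2) * x^2))
    (Eventually.of_forall fun n => (((integrable_G v n).sub hB).const_mul _).aestronglyMeasurable)
    (by
      filter_upwards [eventually_ge_atTop 2] with n hn
      refine Eventually.of_forall fun x => ?_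
      have hn' : (0:ℝ) < √n := by
        have : (0:ℝ) < n := by exact_mod_cast (show 0 < n by omega)
        positivity
      have hE := Real.exp_pos (-(v/Real.pi^2) * x^2)
      rw [Real.norm_eq_abs]
      unfold G
      by_cases hx : x ∈ Set.Ioc (-Real.pi * √(n:ℝ)) (Real.pi * √n)
      · rw [Set.indicator_of_mem hx]
        have := inside_bound h0 h1 hn (x := x) (by
          rw [abs_le, le_div_iff₀ hn', div_le_iff₀ hn']
          exact ⟨hx.1.le, hx.2⟩)
        have : 0 ≤ x^2 * Real.exp (-(v/Real.pi^2) * x^2) := by positivity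
        linarith
      · rw [Set.indicator_of_notMem hx]
        have := outside_bound h0 (show 0 < n by omega) (x := x) (by
          by_contra hlt
          push Not at hlt
          rw [abs_lt, lt_div_iff₀ hn', div_lt_iff₀ hn'] at hlt
          exact hx ⟨hlt.1, hlt.2.le⟩)
        have : 0 ≤ x^4 * Real.exp (-(v/Real.pi^2) * x^2) := by positivity
        linarith)
    (((integrable_pow_gauss hcc 4).const_mul 4).add (integrable_pow_gauss hcc 2))
    (by
      refine Eventually.of_forall fun x => ?_
      refine (pointwise h0 h1 x).congr' ?_
      have hy := (tendsto_y x).abs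
      rw [abs_zero] at hy
      filter_upwards [eventually_gt_atTop 0, hy.eventually (gt_mem_nhds hpi)] with n hn hlt
      have hn' : (0:ℝ) < √n := by
        have : (0:ℝ) < n := by exact_mod_cast hn
        positivity
      rw [abs_lt, lt_div_iff₀ hn', div_lt_iff₀ hn'] at hlt
      unfold G
      rw [Set.indicator_of_mem (show x ∈ Set.Ioc (-Real.pi * √(n:ℝ)) (Real.pi * √n) from ⟨hlt.1, hlt.2.le⟩)])
  have hR : ∫ x : ℝ, (v/24 - v^2/8) * x^4 * Real.exp (-(v/2) * x^2) =
      (1 - 3 * v) / (8 * v) * √(2 * Real.pi / v) := by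
    simp_rw [mul_assoc]
    rw [integral_const_mul, gauss4 hv2, e2]
    field_simp
    ring
  rw [hR] at lim
  refine lim.congr' ?_
  filter_upwards [eventually_gt_atTop 0] with n hn
  rw [integral_const_mul, integral_sub (integrable_G v n) hB, integral_G v hn, integral_gaussian, e2]

end Tie

/-- exact asymptotics of the tie probability `ℙ(Â_{1,3} = Â_{1,2})`
for the 3-node chain: `ℙ = f̃(n)(1 + o(n⁻¹))`. -/
theorem stmt9 (θ : ℝ) (hθ0 : 0 < θ) (hθ1 : θ < 1 / 2) :
    Filter.Tendsto (fun n : ℕ =>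
      (n : ℝ) * (iidProb (isingP θ chainA) n {xs | Ahat xs 0 2 = Ahat xs 0 1} / ftilde θ n - 1))
      Filter.atTop (nhds 0) := by
  have hpi := Real.pi_pos
  set s := Real.sqrt (4 * θ * (1 - θ)) with hs
  have hs0 : 0 < s := Real.sqrt_pos.mpr (by nlinarith)
  have hs1 : s ≤ 1 := Real.sqrt_le_one.mpr (by nlinarith [sq_nonneg (2*θ-1)])
  set M := 1 - θ * (1 - s) with hM
  have hM0 : 0 < M := by nlinarith
  have hK : Real.exp (Kexp θ) = M⁻¹ := by
    unfold Kexp; rw [Real.exp_neg, Real.exp_log hM0]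
  have hKn : ∀ n : ℕ, Real.exp (-(n:ℝ) * Kexp θ) = M ^ n := by
    intro n
    rw [neg_mul, ← mul_neg, Real.exp_nat_mul, Real.exp_neg, hK, inv_inv]
  set v := sigmaSq θ with hv
  have hvM : v = θ * s / M := by rw [hv]; unfold sigmaSq; rw [hK]; rfl
  have h0 : 0 < v := by rw [hvM]; positivity
  have h1 : v < 1/2 := by
    rw [hvM, div_lt_iff₀ hM0]; nlinarith
  have hint : ∀ n : ℕ, 0 < n → iidProb (isingP θ chainA) n {xs | Ahat xs 0 2 = Ahat xs 0 1} =
      M^n * (∫ t in (-Real.pi)..Real.pi, Tie.fa v t ^ n) / (2 * Real.pi) := by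
    intro n hn
    rw [eq_div_iff (by positivity), Tie.tie_integral θ hθ0 hθ1 n hn,
      ← intervalIntegral.integral_const_mul]
    congr 1
    ext t
    rw [← mul_pow]
    congr 1
    rw [Tie.fa, hvM, ← hs]
    field_simp
    rw [hM]; ring
  have main := Tie.main_tendsto h0 h1
  set S := √(2 * Real.pi / v) with hS
  have hS0 : 0 < S := Real.sqrt_pos.mpr (by positivity)
  set c := (1 - 3 * v) / (8 * v) with hc
  have hden : Tendsto (fun n : ℕ => 1 + c / (n:ℝ)) atTop (nhds 1) := by
    have : Tendsto (fun n : ℕ => c / (n:ℝ)) atTop (nhds 0) :=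
      Tendsto.div_atTop tendsto_const_nhds tendsto_natCast_atTop_atTop
    simpa using this.const_add 1
  have fin := (((main.div_const S).sub_const c).div hden one_ne_zero)
  rw [mul_div_assoc, div_self hS0.ne', mul_one, sub_self, zero_div] at fin
  refine fin.congr' ?_
  filter_upwards [eventually_gt_atTop 0, hden.eventually_ne one_ne_zero] with n hn hne
  have hn' : (0:ℝ) < n := by exact_mod_cast hn
  have hft : ftilde θ n = M^n / (v * S * √n) * (1 + c / n) := by
    unfold ftilde
    rw [hKn, ← hv]
    congr 2
    · rw [Real.sqrt_mul (by positivity)]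
      congr 1
      rw [Real.sqrt_eq_iff_mul_self_eq (by positivity) (by positivity)]
      have : S * S = 2 * Real.pi / v := Real.mul_self_sqrt (by positivity)
      symm
      calc _ = v^2 * (S * S) := by ring
        _ = _ := by rw [this]; field_simp
    · rw [hc, div_div]
  rw [hint n hn, hft]
  have hSS : S^2 = 2 * Real.pi / v := Real.sq_sqrt (by positivity)
  have hpiS : 2 * Real.pi = v * S^2 := by rw [hSS]; field_simp
  simp only [Pi.div_apply]
  have hMn : M^n ≠ 0 := by positivity
  have hsn : √(n:ℝ) ≠ 0 := by positivity
  rw [hpiS]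
  generalize (∫ t in (-Real.pi)..Real.pi, Tie.fa v t ^ n) = I
  have e : M ^ n * I / (v * S^2) / (M^n / (v * S * √n) * (1 + c / n)) = (√n * I / S) / (1 + c/n) := by
    field_simp
  rw [e, div_sub_one hne, ← mul_div_assoc]
  congr 1
  field_simp
  ring
end

section
/- Let θ ∈ (0, 1/2), let P = P_{T,θ} on {0,1}³ for the tree T with edge set {{1,2},{2,3}}, and let x_1,…,x_n be i.i.d. samples from P. Define K(θ) := −log(1 − θ·(1 − √(4θ(1−θ)))), σ² := θ·√(4θ(1−θ))·e^{K(θ)}, z := √(θ/(1−θ)), f̃(n) := (e^{−n·K(θ)}/√(2πσ²n))·[1 + (1−3σ²)/(8σ²n)], and f(n) := (f̃(n)/(1−z))·[1 − z(1+z)/(2(1−z)²σ²n)]. Then ℙ(Â_{1,3} ≥ Â_{1,2}) = f(n)·(1 + o(n^{−1})); that is, n·( ℙ(Â_{1,3} ≥ Â_{1,2}) / f(n) − 1 ) → 0 as n → ∞. -/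
open scoped Classical BigOperators
open Filter

section Laplace
open Real MeasureTheory Topology

lemma L_sin : Tendsto (fun t : ℝ => (sin t - t) / t ^ 3) (𝓝[≠] 0) (𝓝 (-1/6)) := by
  rw [tendsto_iff_norm_sub_tendsto_zero]
  have h2 : Tendsto (fun t : ℝ => |t| ^ 2 / 100) (𝓝[≠] 0) (𝓝 0) := by
    have : Tendsto (fun t : ℝ => |t| ^ 2 / 100) (𝓝 0) (𝓝 (|0| ^ 2 / 100)) :=
      Continuous.tendsto (by fun_prop) 0
    simp only [abs_zero, ne_eq, OfNat.ofNat_ne_zero, not_false_eq_true, zero_pow, zero_div] at this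
    exact this.mono_left nhdsWithin_le_nhds
  refine squeeze_zero' (Eventually.of_forall fun _ => norm_nonneg _) ?_ h2
  have hball : ∀ᶠ t : ℝ in 𝓝[≠] 0, |t| ≤ 1 := by
    apply nhdsWithin_le_nhds
    filter_upwards [Metric.ball_mem_nhds (0:ℝ) one_pos] with t ht
    rw [Metric.mem_ball, dist_zero_right, norm_eq_abs] at ht
    exact ht.le
  filter_upwards [hball, self_mem_nhdsWithin] with t ht h0
  have h0 : t ≠ 0 := h0
  have hp : 0 < |t| := abs_pos.mpr h0
  have := sin_bound ht
  rw [norm_eq_abs]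
  have e : (sin t - t) / t ^ 3 - -1/6 = (sin t - (t - t^3/6)) / t^3 := by field_simp; ring
  rw [e, abs_div, abs_pow, div_le_iff₀ (by positivity)]
  calc _ ≤ _ := this
    _ = _ := by ring

lemma L_half : Tendsto (fun t : ℝ => t / 2) (𝓝[≠] 0) (𝓝[≠] 0) := by
  refine tendsto_nhdsWithin_iff.mpr ⟨?_, ?_⟩
  · have : Tendsto (fun t : ℝ => t / 2) (𝓝 0) (𝓝 (0/2)) := Continuous.tendsto (by fun_prop) 0
    rw [zero_div] at this
    exact this.mono_left nhdsWithin_le_nhds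
  · filter_upwards [self_mem_nhdsWithin] with t ht
    have : t ≠ 0 := ht
    simpa using this

lemma one_sub_cos_eq (t : ℝ) : 1 - cos t = 2 * sin (t/2) ^ 2 := by
  rw [sin_sq_eq_half_sub]; ring_nf

lemma L_cos4 : Tendsto (fun t : ℝ => (1 - cos t - t^2/2) / t ^ 4) (𝓝[≠] 0) (𝓝 (-1/24)) := by
  have h := L_sin.comp L_half
  have hid : Tendsto (fun t : ℝ => (t/2)^2) (𝓝[≠] 0) (𝓝 0) := by
    have : Tendsto (fun t : ℝ => (t/2)^2) (𝓝 0) (𝓝 ((0/2)^2)) := Continuous.tendsto (by fun_prop) 0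
    norm_num at this
    exact this.mono_left nhdsWithin_le_nhds
  have h2 := (h.mul ((h.mul hid).const_add 2)).div_const 8
  have e : (-1/6 * (2 + -1/6 * 0) / 8 : ℝ) = -1/24 := by norm_num
  rw [e] at h2
  refine h2.congr' ?_
  filter_upwards [self_mem_nhdsWithin] with t ht
  have h0 : t ≠ 0 := ht
  simp only [Function.comp]
  rw [one_sub_cos_eq]
  field_simp
  ring

lemma L_cos2 : Tendsto (fun t : ℝ => (1 - cos t) / t ^ 2) (𝓝[≠] 0) (𝓝 (1/2)) := by
  have hid : Tendsto (fun t : ℝ => t^2) (𝓝[≠] 0) (𝓝 0) := by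
    have : Tendsto (fun t : ℝ => t^2) (𝓝 0) (𝓝 (0^2)) := Continuous.tendsto (by fun_prop) 0
    norm_num at this
    exact this.mono_left nhdsWithin_le_nhds
  have h2 := (L_cos4.mul hid).add_const (1/2)
  have e : (-1/24 * 0 + 1/2 : ℝ) = 1/2 := by norm_num
  rw [e] at h2
  refine h2.congr' ?_
  filter_upwards [self_mem_nhdsWithin] with t ht
  have h0 : t ≠ 0 := ht
  field_simp
  ring

lemma L_log : Tendsto (fun y : ℝ => (log (1 - y) + y) / y ^ 2) (𝓝[≠] 0) (𝓝 (-1/2)) := by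
  rw [tendsto_iff_norm_sub_tendsto_zero]
  have h2 : Tendsto (fun t : ℝ => |t| * 2) (𝓝[≠] 0) (𝓝 0) := by
    have : Tendsto (fun t : ℝ => |t| * 2) (𝓝 0) (𝓝 (|0| * 2)) :=
      Continuous.tendsto (by fun_prop) 0
    simp only [abs_zero, zero_mul] at this
    exact this.mono_left nhdsWithin_le_nhds
  refine squeeze_zero' (Eventually.of_forall fun _ => norm_nonneg _) ?_ h2
  have hball : ∀ᶠ t : ℝ in 𝓝[≠] 0, |t| ≤ 1/2 := by
    apply nhdsWithin_le_nhds
    filter_upwards [Metric.ball_mem_nhds (0:ℝ) (by norm_num : (0:ℝ) < 1/2)] with t ht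
    rw [Metric.mem_ball, dist_zero_right, norm_eq_abs] at ht
    exact ht.le
  filter_upwards [hball, self_mem_nhdsWithin] with t ht h0
  have h0 : t ≠ 0 := h0
  have hp : 0 < |t| := abs_pos.mpr h0
  have := abs_log_sub_add_sum_range_le (x := t) (by linarith) 2
  rw [norm_eq_abs]
  have e : (log (1 - t) + t) / t ^ 2 - -1/2
      = (∑ i ∈ Finset.range 2, t ^ (i + 1) / ((i:ℝ) + 1) + log (1 - t)) / t^2 := by
    simp only [Finset.sum_range_succ, Finset.sum_range_zero]
    field_simp; push_cast; ring
  rw [e, abs_div, abs_pow, div_le_iff₀ (by positivity)]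
  refine this.trans ?_
  rw [div_le_iff₀ (by linarith)]
  have h3 : 0 ≤ |t|^3 * (1 - 2 * |t|) := mul_nonneg (by positivity) (by linarith)
  have h4 : |t| * 2 * |t|^2 * (1 - |t|) - |t|^(2+1) = |t|^3 * (1 - 2 * |t|) := by ring
  linarith

lemma L_logphi (s : ℝ) (hs : 0 < s) :
    Tendsto (fun t : ℝ => (log (1 - s * (1 - cos t)) + s * t^2/2) / t ^ 4) (𝓝[≠] 0)
      (𝓝 (s/24 - s^2/8)) := by
  have hne : ∀ᶠ t : ℝ in 𝓝[≠] 0, s * (1 - cos t) ≠ 0 := by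
    have := L_cos2.eventually_ne (by norm_num : (1/2:ℝ) ≠ 0)
    filter_upwards [this] with t ht h
    apply ht
    have : 1 - cos t = 0 := by simpa [hs.ne'] using h
    simp [this]
  have ht0 : Tendsto (fun t : ℝ => s * (1 - cos t)) (𝓝[≠] 0) (𝓝[≠] 0) := by
    refine tendsto_nhdsWithin_iff.mpr ⟨?_, hne⟩
    have : Tendsto (fun t : ℝ => s * (1 - cos t)) (𝓝 0) (𝓝 (s * (1 - cos 0))) :=
      Continuous.tendsto (by fun_prop) 0
    simp only [cos_zero, sub_self, mul_zero] at this
    exact this.mono_left nhdsWithin_le_nhds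
  have h := ((L_log.comp ht0).mul ((L_cos2.const_mul s).pow 2)).sub (L_cos4.const_mul s)
  have e : (-1/2 * (s * (1/2))^2 - s * (-1/24) : ℝ) = s/24 - s^2/8 := by ring
  rw [e] at h
  refine h.congr' ?_
  filter_upwards [self_mem_nhdsWithin, hne] with t ht hn
  have h0 : t ≠ 0 := ht
  have h1 : 1 - cos t ≠ 0 := fun h => hn (by rw [h, mul_zero])
  simp only [Function.comp]
  field_simp
  ring

noncomputable def gz (z t : ℝ) : ℝ := (1 - z * cos t) / (1 - 2 * z * cos t + z^2)

lemma gz_den (z t : ℝ) (hz0 : 0 < z) : (1-z)^2 ≤ 1 - 2 * z * cos t + z^2 := by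
  nlinarith [cos_le_one t]

lemma gz_sub (z t : ℝ) (hz0 : 0 < z) (hz1 : z < 1) :
    gz z t - 1/(1-z) = -(z*(1+z)/(1-z)) * (1 - cos t) / (1 - 2 * z * cos t + z^2) := by
  have h := gz_den z t hz0
  have : 0 < 1 - z := by linarith
  have h1 : 0 < 1 - 2 * z * cos t + z^2 := lt_of_lt_of_le (by positivity) h
  have h1' := h1.ne'
  unfold gz
  rw [div_sub_div _ _ h1' this.ne', div_eq_div_iff (by positivity) h1']
  field_simp
  ring

lemma gz_cont (z : ℝ) (hz0 : 0 < z) (hz1 : z < 1) : Continuous (gz z) := by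
  unfold gz
  refine Continuous.div (by fun_prop) (by fun_prop) fun t => ?_
  have h := gz_den z t hz0
  have : 0 < 1 - z := by linarith
  exact (lt_of_lt_of_le (by positivity) h).ne'

lemma gz_lim (z : ℝ) (hz0 : 0 < z) (hz1 : z < 1) :
    Tendsto (fun t : ℝ => (gz z t - 1/(1-z)) / t ^ 2) (𝓝[≠] 0)
      (𝓝 (-(z*(1+z)/(1-z)^3)/2)) := by
  have : 0 < 1 - z := by linarith
  have hc : Tendsto (fun t : ℝ => 1 - 2 * z * cos t + z^2) (𝓝[≠] 0) (𝓝 ((1-z)^2)) := by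
    have : Tendsto (fun t : ℝ => 1 - 2 * z * cos t + z^2) (𝓝 0) (𝓝 (1 - 2 * z * cos 0 + z^2)) :=
      Continuous.tendsto (by fun_prop) 0
    rw [cos_zero] at this
    have e : 1 - 2 * z * 1 + z^2 = (1-z)^2 := by ring
    rw [e] at this
    exact this.mono_left nhdsWithin_le_nhds
  have h := (L_cos2.const_mul (-(z*(1+z)/(1-z)))).div hc (by positivity)
  have e : -(z*(1+z)/(1-z)) * (1/2) / (1-z)^2 = -(z*(1+z)/(1-z)^3)/2 := by field_simp
  rw [e] at h
  refine h.congr fun t => ?_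
  rw [gz_sub z t hz0 hz1]
  simp only [Pi.div_apply]
  ring

lemma gz_sub_bound (z t : ℝ) (hz0 : 0 < z) (hz1 : z < 1) :
    |gz z t - 1/(1-z)| ≤ (z*(1+z)/(1-z)^3) * t^2 := by
  have h1z : 0 < 1 - z := by linarith
  have h := gz_den z t hz0
  have h1 : 0 < 1 - 2 * z * cos t + z^2 := lt_of_lt_of_le (by positivity) h
  have hc : 0 ≤ 1 - cos t := by linarith [cos_le_one t]
  have hc2 : 1 - cos t ≤ t^2 := by nlinarith [one_sub_sq_div_two_le_cos (x := t)]
  rw [gz_sub z t hz0 hz1, abs_div, abs_mul, abs_neg, abs_of_pos h1, abs_of_nonneg hc,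
    abs_of_pos (by positivity : 0 < z*(1+z)/(1-z))]
  calc z*(1+z)/(1-z) * (1 - cos t) / (1 - 2 * z * cos t + z^2)
      ≤ z*(1+z)/(1-z) * t^2 / (1-z)^2 := by gcongr
    _ = _ := by field_simp

lemma gz_bound (z t : ℝ) (hz0 : 0 < z) (hz1 : z < 1) :
    |gz z t| ≤ 2 / (1-z)^2 := by
  have h1z : 0 < 1 - z := by linarith
  have h := gz_den z t hz0
  have h1 : 0 < 1 - 2 * z * cos t + z^2 := lt_of_lt_of_le (by positivity) h
  unfold gz
  rw [abs_div, abs_of_pos h1]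
  gcongr
  rw [abs_le]; constructor <;> nlinarith [cos_le_one t, neg_one_le_cos t]

lemma phi_abs (s t : ℝ) (hs0 : 0 < s) (hs1 : s < 1) (ht : |t| ≤ π) :
    |1 - s * (1 - cos t)| ≤ exp (-(2 * min s (1-s) / π^2) * t^2) := by
  have hc := cos_le_one_sub_mul_cos_sq ht
  have h2 := neg_one_le_cos t
  have h3 := cos_le_one t
  have hm1 : min s (1-s) ≤ s := min_le_left _ _
  have hm2 : min s (1-s) ≤ 1 - s := min_le_right _ _
  have hm0 : 0 < min s (1-s) := lt_min hs0 (by linarith)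
  set c := min s (1-s)
  have a1 : |1 - s * (1 - cos t)| ≤ 1 - c * (1 - cos t) := by
    rw [abs_le]; constructor <;> nlinarith
  have a2 : c * (2 / π^2 * t^2) ≤ c * (1 - cos t) := by gcongr; linarith
  have a3 := add_one_le_exp (-(2 * c / π^2) * t^2)
  have a4 : -(2 * c / π^2) * t^2 = - (c * (2 / π^2 * t^2)) := by ring
  rw [a4] at a3 ⊢
  linarith

lemma gauss_abs (s t : ℝ) (hs0 : 0 < s) (hs1 : s < 1) :
    exp (-(s/2) * t^2) ≤ exp (-(2 * min s (1-s) / π^2) * t^2) := by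
  have hm1 : min s (1-s) ≤ s := min_le_left _ _
  apply exp_le_exp.mpr
  have : 2 * min s (1-s) / π^2 ≤ s/2 := by
    rw [div_le_iff₀ (by positivity)]
    have h9 : 4 ≤ π^2 := by nlinarith [pi_gt_three]
    nlinarith
  nlinarith [sq_nonneg t]

lemma phi_sub (s t : ℝ) (hs0 : 0 < s) (hs1 : s < 1) :
    |(1 - s * (1 - cos t)) - exp (-(s/2) * t^2)| ≤ 4 * t^4 := by
  have h1 : |cos t - (1 - t^2/2)| ≤ 3 * t^4 := by
    by_cases h : |t| ≤ 1
    · have := cos_bound h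
      have e : |t|^4 = t^4 := by rw [show 4 = 2*2 by rfl, pow_mul, sq_abs, ← pow_mul]
      rw [e] at this
      nlinarith [sq_nonneg (t^2)]
    · have ht : 1 < t^2 := by
        have : 1 < |t| := by linarith
        rw [← sq_abs]; nlinarith
      rw [abs_le]; constructor <;> nlinarith [cos_le_one t, neg_one_le_cos t]
  have h2 : |exp (-(s/2) * t^2) - 1 - (-(s/2) * t^2)| ≤ (-(s/2) * t^2)^2 := by
    have hneg : -(s/2) * t^2 ≤ 0 := by nlinarith [sq_nonneg t]
    generalize -(s/2) * t^2 = y at hneg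
    by_cases h : |y| ≤ 1
    · exact abs_exp_sub_one_sub_id_le h
    · rw [abs_of_nonpos hneg] at h
      have := exp_le_one_iff.mpr hneg
      have := exp_pos y
      rw [abs_le]; constructor <;> nlinarith
  have h3 : (-(s/2) * t^2)^2 ≤ t^4 := by
    have : (-(s/2) * t^2)^2 = s^2/4 * t^4 := by ring
    rw [this]
    have : s^2/4 ≤ 1 := by nlinarith
    nlinarith [sq_nonneg (t^2)]
  have e : (1 - s * (1 - cos t)) - exp (-(s/2) * t^2) =
    s * (cos t - (1 - t^2/2)) - (exp (-(s/2) * t^2) - 1 - (-(s/2) * t^2)) := by ring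
  rw [e]
  calc _ ≤ |s * (cos t - (1 - t^2/2))| + |exp (-(s/2) * t^2) - 1 - (-(s/2) * t^2)| := abs_sub _ _
    _ ≤ 3 * t^4 + t^4 := by
      gcongr
      · rw [abs_mul, abs_of_pos hs0]
        nlinarith [abs_nonneg (cos t - (1 - t^2/2))]
      · linarith
    _ = _ := by ring

/-- integrability of gaussian moments -/
lemma gint (b : ℝ) (hb : 0 < b) (k : ℕ) : Integrable (fun x : ℝ => x^k * exp (-b * x^2)) := by
  have := integrable_rpow_mul_exp_neg_mul_sq hb (s := k) (by linarith [(k.cast_nonneg : (0:ℝ) ≤ k)])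
  simpa using this

lemma gderiv (b : ℝ) (k : ℕ) (x : ℝ) : HasDerivAt (fun x : ℝ => x^(k+1) * exp (-b * x^2))
    ((k+1) * (x^k * exp (-b * x^2)) - 2*b * (x^(k+2) * exp (-b * x^2))) x := by
  have h1 : HasDerivAt (fun x : ℝ => x^(k+1)) ((k+1) * x^k) x := by
    simpa using hasDerivAt_pow (k+1) x
  have h2 : HasDerivAt (fun x : ℝ => exp (-b * x^2)) (exp (-b * x^2) * (-b * (2 * x))) x := by
    have := ((hasDerivAt_pow 2 x).const_mul (-b)).exp
    simpa using this
  convert! h1.mul h2 using 1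
  ring

lemma gmom (b : ℝ) (hb : 0 < b) (k : ℕ) :
    ∫ x : ℝ, x^(k+2) * exp (-b * x^2) = (k+1)/(2*b) * ∫ x : ℝ, x^k * exp (-b * x^2) := by
  have h := integral_eq_zero_of_hasDerivAt_of_integrable (gderiv b k)
    (((gint b hb k).const_mul _).sub ((gint b hb (k+2)).const_mul _)) (gint b hb (k+1))
  rw [integral_sub ((gint b hb k).const_mul _) ((gint b hb (k+2)).const_mul _),
    integral_const_mul, integral_const_mul] at h
  rw [div_mul_eq_mul_div, eq_div_iff (by positivity)]
  linarith


lemma tn_lim (u : ℝ) (hu : u ≠ 0) : Tendsto (fun n : ℕ => u / √(n:ℝ)) atTop (𝓝[≠] 0) := by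
  refine tendsto_nhdsWithin_iff.mpr ⟨?_, ?_⟩
  · have h1 : Tendsto (fun n : ℕ => √(n:ℝ)) atTop atTop :=
      tendsto_sqrt_atTop.comp tendsto_natCast_atTop_atTop
    exact h1.const_div_atTop u
  · filter_upwards [eventually_gt_atTop 0] with n hn
    have : (0:ℝ) < n := by exact_mod_cast hn
    have : u / √(n:ℝ) ≠ 0 := by positivity
    exact this

lemma exp_lim (y : ℕ → ℝ) (L : ℝ) (h : Tendsto (fun n : ℕ => (n:ℝ) * y n) atTop (𝓝 L)) :
    Tendsto (fun n : ℕ => (n:ℝ) * (exp (y n) - 1)) atTop (𝓝 L) := by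
  have hinv : Tendsto (fun n : ℕ => ((n:ℝ))⁻¹) atTop (𝓝 0) := tendsto_inv_atTop_nhds_zero_nat
  have hy : Tendsto y atTop (𝓝 0) := by
    have := h.mul hinv
    rw [mul_zero] at this
    refine this.congr' ?_
    filter_upwards [eventually_gt_atTop 0] with n hn
    have : (n:ℝ) ≠ 0 := by exact_mod_cast hn.ne'
    field_simp
  have h2 : Tendsto (fun n : ℕ => (n:ℝ) * (exp (y n) - 1 - y n)) atTop (𝓝 0) := by
    have hb : Tendsto (fun n : ℕ => |(n:ℝ) * y n * y n|) atTop (𝓝 0) := by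
      have := (h.mul hy).abs
      simpa using this
    refine squeeze_zero_norm' ?_ hb
    have : ∀ᶠ n in atTop, |y n| ≤ 1 := by
      have := hy.abs
      rw [abs_zero] at this
      filter_upwards [this.eventually_lt_const one_pos] with n hn using hn.le
    filter_upwards [this] with n hn
    have := abs_exp_sub_one_sub_id_le hn
    rw [norm_eq_abs, abs_mul, mul_assoc, abs_mul]
    refine mul_le_mul_of_nonneg_left ?_ (abs_nonneg _)
    rw [← sq, abs_of_nonneg (sq_nonneg (y n))]
    exact this
  have := h.add h2
  rw [add_zero] at this
  refine this.congr fun n => by ring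

noncomputable def HH (s z : ℝ) (n : ℕ) : ℝ → ℝ :=
  Set.indicator (Set.Ioc (-π) π) (fun t => (1 - s * (1 - cos t))^n * gz z t)

noncomputable def FF (s z : ℝ) (n : ℕ) (u : ℝ) : ℝ :=
  n * (HH s z n (u / √(n:ℝ)) - 1/(1-z) * exp (-(s/2) * u^2))

lemma FF_lim (s z : ℝ) (hs0 : 0 < s) (hz0 : 0 < z) (hz1 : z < 1) (u : ℝ) (hu : u ≠ 0) :
    Tendsto (fun n => FF s z n u) atTop (𝓝
      ((s/24 - s^2/8) / (1-z) * (u^4 * exp (-(s/2) * u^2)) +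
        (-(z*(1+z)/(1-z)^3)/2) * (u^2 * exp (-(s/2) * u^2)))) := by
  have ht := tn_lim u hu
  have ht0 : Tendsto (fun n : ℕ => u / √(n:ℝ)) atTop (𝓝 0) := ht.mono_right nhdsWithin_le_nhds
  have h1 : Tendsto (fun n : ℕ => (n:ℝ) *
      (exp ((n:ℝ) * (log (1 - s * (1 - cos (u / √(n:ℝ)))) + s * (u / √(n:ℝ))^2/2)) - 1)) atTop
      (𝓝 (u^4 * (s/24 - s^2/8))) := by
    apply exp_lim
    have := ((L_logphi s hs0).comp ht).const_mul (u^4)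
    refine this.congr' ?_
    filter_upwards [eventually_gt_atTop 0] with n hn
    have hn' : (0:ℝ) < n := by exact_mod_cast hn
    have hq : √(n:ℝ)^2 = n := sq_sqrt hn'.le
    simp only [Function.comp]
    generalize log (1 - s * (1 - cos (u / √(n:ℝ)))) + s * (u / √(n:ℝ))^2/2 = A
    rw [div_pow, show √(n:ℝ)^4 = (n:ℝ)^2 by rw [show 4 = 2*2 by rfl, pow_mul, hq]]
    field_simp
  have h2 : Tendsto (fun n : ℕ => (n:ℝ) * (gz z (u / √(n:ℝ)) - 1/(1-z))) atTop
      (𝓝 (u^2 * (-(z*(1+z)/(1-z)^3)/2))) := by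
    have := ((gz_lim z hz0 hz1).comp ht).const_mul (u^2)
    refine this.congr' ?_
    filter_upwards [eventually_gt_atTop 0] with n hn
    have hn' : (0:ℝ) < n := by exact_mod_cast hn
    have hq : √(n:ℝ)^2 = n := sq_sqrt hn'.le
    simp only [Function.comp]
    generalize gz z (u / √(n:ℝ)) - 1/(1-z) = A
    rw [div_pow, hq]
    field_simp
  have hg : Tendsto (fun n : ℕ => gz z (u / √(n:ℝ))) atTop (𝓝 (1/(1-z))) := by
    have := ((gz_cont z hz0 hz1).tendsto 0).comp ht0
    have e : gz z 0 = 1/(1-z) := by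
      have := gz_sub z 0 hz0 hz1
      simp only [cos_zero, sub_self, mul_zero, zero_div] at this
      linarith
    rwa [e] at this
  have hphi : ∀ᶠ n : ℕ in atTop, 0 < 1 - s * (1 - cos (u / √(n:ℝ))) := by
    have : Tendsto (fun t : ℝ => 1 - s * (1 - cos t)) (𝓝 0) (𝓝 (1 - s * (1 - cos 0))) :=
      Continuous.tendsto (by fun_prop) 0
    simp only [cos_zero, sub_self, mul_zero, sub_zero] at this
    exact (this.comp ht0).eventually_const_lt one_pos
  have hin : ∀ᶠ n : ℕ in atTop, u / √(n:ℝ) ∈ Set.Ioc (-π) π :=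
    ht0.eventually (Ioc_mem_nhds (by linarith [pi_pos]) pi_pos)
  have := ((h1.mul hg).add h2).const_mul (exp (-(s/2) * u^2))
  have e : exp (-(s/2) * u^2) * (u^4 * (s/24 - s^2/8) * (1/(1-z)) +
    u^2 * (-(z*(1+z)/(1-z)^3)/2)) = ((s/24 - s^2/8) / (1-z) * (u^4 * exp (-(s/2) * u^2)) +
        (-(z*(1+z)/(1-z)^3)/2) * (u^2 * exp (-(s/2) * u^2))) := by ring
  rw [e] at this
  refine this.congr' ?_
  filter_upwards [eventually_gt_atTop 0, hphi, hin] with n hn hp hi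
  have hn' : (0:ℝ) < n := by exact_mod_cast hn
  have hq : √(n:ℝ)^2 = n := sq_sqrt hn'.le
  unfold FF HH
  rw [Set.indicator_of_mem hi]
  have e2 : (n:ℝ) * (s * (u / √(n:ℝ))^2/2) = - (-(s/2) * u^2) := by
    rw [div_pow, hq]; field_simp
  have e3 : exp (n * (log (1 - s * (1 - cos (u / √(n:ℝ)))) + s * (u / √(n:ℝ))^2/2)) =
      (1 - s * (1 - cos (u / √(n:ℝ)))) ^ n * (exp (-(s/2) * u^2))⁻¹ := by
    rw [mul_add, exp_add, exp_nat_mul, exp_log hp, e2, exp_neg]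
  rw [e3]
  have hE := (exp_pos (-(s/2) * u^2)).ne'
  generalize exp (-(s/2) * u^2) = E at *
  generalize 1/(1-z) = g0
  generalize (1 - s * (1 - cos (u / √(n:ℝ)))) ^ n = A
  field_simp
  ring

lemma FF_bound (s z : ℝ) (hs0 : 0 < s) (hs1 : s < 1) (hz0 : 0 < z) (hz1 : z < 1) (n : ℕ)
    (hn : 2 ≤ n) (u : ℝ) :
    ‖FF s z n u‖ ≤ (8 / (1-z)^2) * (u^4 * exp (-(min s (1-s) / π^2) * u^2)) +
      (z*(1+z)/(1-z)^3 + 1/(1-z)) * (u^2 * exp (-(s/2) * u^2)) := by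
  have hn' : (2:ℝ) ≤ n := by exact_mod_cast hn
  have hn0 : (0:ℝ) < n := by linarith
  have h1z : 0 < 1 - z := by linarith
  have hq : √(n:ℝ)^2 = n := sq_sqrt hn0.le
  have hE : exp (-(s/2) * u^2) = exp (-(s/2) * (u / √(n:ℝ))^2) ^ n := by
    rw [← exp_nat_mul, div_pow, hq]; congr 1; field_simp
  have hu2 : u^2 = n * (u / √(n:ℝ))^2 := by rw [div_pow, hq]; field_simp
  have hm0 : 0 < min s (1-s) := lt_min hs0 (by linarith)
  unfold FF HH
  by_cases hi : u / √(n:ℝ) ∈ Set.Ioc (-π) π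
  · rw [Set.indicator_of_mem hi]
    have habs : |u / √(n:ℝ)| ≤ π := abs_le.mpr ⟨hi.1.le, hi.2⟩
    have hc : exp (-(2 * min s (1-s) / π^2) * (u / √(n:ℝ))^2) ^ (n-1) ≤
        exp (-(min s (1-s) / π^2) * u^2) := by
      rw [← exp_nat_mul]
      apply exp_le_exp.mpr
      rw [hu2, Nat.cast_sub (by omega)]
      have : 0 ≤ min s (1-s) / π^2 * (u / √(n:ℝ))^2 := by positivity
      push_cast
      have e : ((n:ℝ) - 1) * (-(2 * min s (1-s) / π^2) * (u / √(n:ℝ))^2) =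
        -(2 * ((n:ℝ)-1)) * (min s (1-s) / π^2 * (u / √(n:ℝ))^2) := by ring
      rw [e]
      nlinarith
    have b1 := phi_abs s _ hs0 hs1 habs
    have b2 := gauss_abs s (u / √(n:ℝ)) hs0 hs1
    have b3 := phi_sub s (u / √(n:ℝ)) hs0 hs1
    have b4 := gz_bound z (u / √(n:ℝ)) hz0 hz1
    have b5 := gz_sub_bound z (u / √(n:ℝ)) hz0 hz1
    have hmain := abs_pow_sub_pow_le (1 - s * (1 - cos (u / √(n:ℝ))))
      (exp (-(s/2) * (u / √(n:ℝ))^2)) n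
    have hmax : max |1 - s * (1 - cos (u / √(n:ℝ)))| |exp (-(s/2) * (u / √(n:ℝ))^2)| ≤
        exp (-(2 * min s (1-s) / π^2) * (u / √(n:ℝ))^2) :=
      max_le b1 (by rw [abs_of_pos (exp_pos _)]; exact b2)
    have hdiff : |(1 - s * (1 - cos (u / √(n:ℝ)))) ^ n - exp (-(s/2) * u^2)| ≤
        4 * (u / √(n:ℝ))^4 * n * exp (-(min s (1-s) / π^2) * u^2) := by
      rw [hE]
      refine hmain.trans ?_
      refine mul_le_mul (by gcongr) ((pow_le_pow_left₀ (by positivity) hmax _).trans hc)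
        (by positivity) (by positivity)
    set t := u / √(n:ℝ)
    have e : (n:ℝ) * ((1 - s * (1 - cos t)) ^ n * gz z t - 1/(1-z) * exp (-(s/2) * u^2)) =
      n * (((1 - s * (1 - cos t)) ^ n - exp (-(s/2) * u^2)) * gz z t) +
      n * (exp (-(s/2) * u^2) * (gz z t - 1/(1-z))) := by ring
    rw [e]
    refine (norm_add_le _ _).trans ?_
    rw [norm_eq_abs, norm_eq_abs, abs_mul, abs_mul, abs_mul, abs_mul, abs_of_pos hn0,
      abs_of_pos (exp_pos _)]
    have c1 : (n:ℝ) * (|(1 - s * (1 - cos t)) ^ n - exp (-(s/2) * u^2)| * |gz z t|) ≤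
      n * ((4 * t^4 * n * exp (-(min s (1-s) / π^2) * u^2)) * (2 / (1-z)^2)) := by gcongr
    have c2 : (n:ℝ) * (exp (-(s/2) * u^2) * |gz z t - 1/(1-z)|) ≤
      n * (exp (-(s/2) * u^2) * ((z*(1+z)/(1-z)^3) * t^2)) := by gcongr
    have d1 : n * ((4 * t^4 * n * exp (-(min s (1-s) / π^2) * u^2)) * (2 / (1-z)^2)) =
      (8 / (1-z)^2) * (u^4 * exp (-(min s (1-s) / π^2) * u^2)) := by
      rw [show u^4 = (n * t^2)^2 by rw [← hu2]; ring]; ring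
    have d2 : n * (exp (-(s/2) * u^2) * ((z*(1+z)/(1-z)^3) * t^2)) =
      (z*(1+z)/(1-z)^3) * (u^2 * exp (-(s/2) * u^2)) := by
      nth_rewrite 2 [hu2]; ring
    have d3 : 0 ≤ 1/(1-z) * (u^2 * exp (-(s/2) * u^2)) := by positivity
    rw [d1] at c1
    rw [d2] at c2
    rw [add_mul]
    linarith
  · rw [Set.indicator_of_notMem hi, zero_sub, norm_eq_abs, mul_neg, abs_neg,
      abs_of_nonneg (by positivity)]
    have h9 : 1 ≤ (u / √(n:ℝ))^2 := by
      have : ¬ (|u / √(n:ℝ)| < π) := fun h => hi ⟨(abs_lt.mp h).1, (abs_lt.mp h).2.le⟩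
      rw [← sq_abs]
      nlinarith [pi_gt_three]
    have : (n:ℝ) ≤ u^2 := by rw [hu2]; nlinarith
    have a1 : 0 ≤ (8 / (1-z)^2) * (u^4 * exp (-(min s (1-s) / π^2) * u^2)) := by positivity
    have a2 : 0 ≤ z*(1+z)/(1-z)^3 * (u^2 * exp (-(s/2) * u^2)) := by positivity
    have a3 : n * (1/(1-z) * exp (-(s/2) * u^2)) ≤ u^2 * (1/(1-z) * exp (-(s/2) * u^2)) := by
      gcongr
    rw [add_mul]
    linarith

lemma HH_int (s z : ℝ) (hz0 : 0 < z) (hz1 : z < 1) (n : ℕ) : Integrable (HH s z n) := by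
  unfold HH
  rw [integrable_indicator_iff measurableSet_Ioc]
  have := gz_cont z hz0 hz1
  exact (Continuous.integrableOn_Icc (by fun_prop)).mono_set Set.Ioc_subset_Icc_self

lemma FF_integral (s z : ℝ) (hs0 : 0 < s) (hz0 : 0 < z) (hz1 : z < 1) (n : ℕ) (hn : 2 ≤ n) :
    ∫ u, FF s z n u = n * (√(n:ℝ) * (∫ t in (-π)..π, (1 - s * (1 - cos t))^n * gz z t)
      - 1/(1-z) * √(2 * π / s)) := by
  have hn' : (2:ℝ) ≤ n := by exact_mod_cast hn
  have hq : √(n:ℝ) ≠ 0 := by positivity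
  unfold FF
  rw [integral_const_mul, integral_sub ((HH_int s z hz0 hz1 n).comp_div hq)
    ((integrable_exp_neg_mul_sq (by positivity)).const_mul _), integral_const_mul,
    integral_gaussian, Measure.integral_comp_div (HH s z n), abs_of_nonneg (sqrt_nonneg _),
    smul_eq_mul, intervalIntegral.integral_of_le (by linarith [pi_pos])]
  unfold HH
  rw [integral_indicator measurableSet_Ioc]
  congr 4
  field_simp

lemma laplace (s z : ℝ) (hs0 : 0 < s) (hs1 : s < 1) (hz0 : 0 < z) (hz1 : z < 1) :
    Tendsto (fun n : ℕ => (n:ℝ) * (√(n:ℝ) * (∫ t in (-π)..π, (1 - s * (1 - cos t))^n * gz z t)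
      - 1/(1-z) * √(2 * π / s))) atTop
      (𝓝 (1/(1-z) * √(2 * π / s) * ((1-3*s)/(8*s) - z*(1+z)/(2*(1-z)^2*s)))) := by
  have hm0 : 0 < min s (1-s) := lt_min hs0 (by linarith)
  have hs2 : 0 < s/2 := by positivity
  have key := tendsto_integral_filter_of_dominated_convergence (μ := volume) (l := atTop)
    (F := fun n => FF s z n)
    (f := fun u => ((s/24 - s^2/8) / (1-z) * (u^4 * exp (-(s/2) * u^2)) +
        (-(z*(1+z)/(1-z)^3)/2) * (u^2 * exp (-(s/2) * u^2))))
    (fun u => (8 / (1-z)^2) * (u^4 * exp (-(min s (1-s) / π^2) * u^2)) +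
      (z*(1+z)/(1-z)^3 + 1/(1-z)) * (u^2 * exp (-(s/2) * u^2)))
    (by
      filter_upwards [eventually_ge_atTop 2] with n hn
      have hn' : (2:ℝ) ≤ n := by exact_mod_cast hn
      have hq : √(n:ℝ) ≠ 0 := by positivity
      unfold FF
      exact ((((HH_int s z hz0 hz1 n).comp_div hq).sub
        ((integrable_exp_neg_mul_sq hs2).const_mul _)).const_mul _).aestronglyMeasurable)
    (by
      filter_upwards [eventually_ge_atTop 2] with n hn
      exact Eventually.of_forall fun u => FF_bound s z hs0 hs1 hz0 hz1 n hn u)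
    (((gint _ (by positivity) 4).const_mul _).add ((gint _ hs2 2).const_mul _))
    (by
      have : ∀ᵐ u : ℝ, u ≠ 0 := by simp [ae_iff, measure_singleton]
      filter_upwards [this] with u hu
      exact FF_lim s z hs0 hz0 hz1 u hu)
  have hI : ∫ u : ℝ, ((s/24 - s^2/8) / (1-z) * (u^4 * exp (-(s/2) * u^2)) +
        (-(z*(1+z)/(1-z)^3)/2) * (u^2 * exp (-(s/2) * u^2))) =
      1/(1-z) * √(2 * π / s) * ((1-3*s)/(8*s) - z*(1+z)/(2*(1-z)^2*s)) := by
    have h0 : ∫ u : ℝ, u^0 * exp (-(s/2) * u^2) = √(2 * π / s) := by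
      simp only [pow_zero, one_mul]
      rw [integral_gaussian]; congr 1; field_simp
    have h2 := gmom (s/2) hs2 0
    have h4 := gmom (s/2) hs2 2
    norm_num only at h2 h4
    rw [integral_add ((gint _ hs2 4).const_mul _) ((gint _ hs2 2).const_mul _),
      integral_const_mul, integral_const_mul]
    have : 1 - z ≠ 0 := by linarith
    rw [h4, h2, h0]
    field_simp
    ring
  rw [hI] at key
  refine key.congr' ?_
  filter_upwards [eventually_ge_atTop 2] with n hn
  exact FF_integral s z hs0 hz0 hz1 n hn

end Laplace

section Fourier
open MeasureTheory Complex

lemma exp_int (l : ℝ) (k : ℤ) :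
    ∫ t in (-Real.pi)..Real.pi, cexp (k * (l + t * I)) = if k = 0 then 2 * (Real.pi:ℂ) else 0 := by
  split_ifs with h
  · subst h
    simp; ring
  · have hk : (k:ℂ) * I ≠ 0 := mul_ne_zero (by exact_mod_cast h) I_ne_zero
    have e : ∀ t : ℝ, cexp (k * (l + t * I)) = cexp (k * l) * cexp (k * I * t) := by
      intro t; rw [← Complex.exp_add]; congr 1; ring
    simp_rw [e]
    rw [intervalIntegral.integral_const_mul, integral_exp_mul_complex hk]
    have e2 : cexp (k * I * (Real.pi : ℝ)) = cexp (k * I * ((-Real.pi : ℝ) : ℂ)) := by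
      rw [Complex.exp_eq_exp_iff_exists_int]
      exact ⟨k, by push_cast; ring⟩
    rw [e2]; simp

lemma ind_int (l : ℝ) (hl : 0 < l) (m : ℤ) :
    ∫ t in (-Real.pi)..Real.pi, cexp (m * (l + t * I)) * (1 - cexp (-(l + t * I)))⁻¹
      = if 0 ≤ m then 2 * (Real.pi:ℂ) else 0 := by
  have hnorm : ∀ t : ℝ, ‖cexp (-(l + t * I))‖ = Real.exp (-l) := by
    intro t; rw [Complex.norm_exp]; simp
  have hlt : Real.exp (-l) < 1 := by simpa using hl
  have hs : HasSum (fun j : ℕ => ∫ t in (-Real.pi)..Real.pi, cexp ((m - j : ℤ) * (l + t * I)))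
      (∫ t in (-Real.pi)..Real.pi, cexp (m * (l + t * I)) * (1 - cexp (-(l + t * I)))⁻¹) := by
    refine intervalIntegral.hasSum_integral_of_dominated_convergence
      (fun j _ => Real.exp (m * l) * Real.exp (-l) ^ j) ?_ ?_ ?_ ?_ ?_
    · intro j
      exact Continuous.aestronglyMeasurable (by fun_prop)
    · intro j
      refine Eventually.of_forall fun t _ => le_of_eq ?_
      rw [Complex.norm_exp, ← Real.exp_nat_mul, ← Real.exp_add]
      congr 1
      simp
      ring
    · exact Eventually.of_forall fun t _ =>
        (summable_geometric_of_lt_one (Real.exp_pos _).le hlt).mul_left _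
    · exact intervalIntegrable_const
    · refine Eventually.of_forall fun t _ => ?_
      have := (hasSum_geometric_of_norm_lt_one (ξ := cexp (-(l + t * I)))
        (by rw [hnorm]; exact hlt)).mul_left (cexp (m * (l + t * I)))
      convert! this using 2 with j
      rw [← Complex.exp_nat_mul, ← Complex.exp_add]
      congr 1
      push_cast
      ring
  simp_rw [exp_int] at hs
  split_ifs with h
  · obtain ⟨k, rfl⟩ := Int.eq_ofNat_of_zero_le h
    have h2 := hasSum_ite_eq k (2 * (Real.pi:ℂ))
    refine hs.unique ?_
    convert! h2 using 2 with j
    simp [sub_eq_zero, eq_comm]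
  · refine hs.unique ?_
    convert! hasSum_zero using 2 with j
    rw [if_neg]
    omega

/-- the step -/
def stp (x : Fin 3 → Bool) : ℤ := (if x 0 = x 2 then 1 else 0) - (if x 0 = x 1 then 1 else 0)

lemma event_iff {n : ℕ} (hn : 0 < n) (xs : Fin n → Fin 3 → Bool) :
    Ahat xs 0 1 ≤ Ahat xs 0 2 ↔ 0 ≤ ∑ k, stp (xs k) := by
  have hn' : (0:ℝ) < n := by exact_mod_cast hn
  unfold Ahat stp
  rw [div_le_div_iff_of_pos_right hn', Nat.cast_le, Finset.sum_sub_distrib, sub_nonneg,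
    Finset.card_filter, Finset.card_filter, ← Nat.cast_le (α := ℤ)]
  push_cast
  rfl

lemma ising_eval (θ : ℝ) (x : Fin 3 → Bool) : isingP θ chainA x =
    1 / 2 * ((if x 0 = x 1 then 1 - θ else θ) * (if x 1 = x 2 then 1 - θ else θ)) := by
  have : chainA.edgeFinset = {s(0,1), s(1,2)} := by
    ext e
    rw [SimpleGraph.mem_edgeFinset]
    unfold chainA
    simp only [SimpleGraph.edgeSet_fromEdgeSet, Set.mem_sdiff, Set.mem_insert_iff,
      Set.mem_singleton_iff, Finset.mem_insert, Finset.mem_singleton]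
    constructor
    · exact fun h => h.1
    · intro h
      refine ⟨h, ?_⟩
      rcases h with rfl | rfl <;> simp
  unfold isingP
  rw [this, Finset.prod_pair (by decide)]
  simp only [pairWeight, Sym2.lift_mk]

lemma sum_ising (θ : ℝ) (w : ℂ) : ∑ x : Fin 3 → Bool, (isingP θ chainA x : ℂ) * cexp (stp x * w)
    = (1 - θ) + θ^2 * cexp w + θ * (1-θ) * cexp (-w) := by
  have : (Finset.univ : Finset (Fin 3 → Bool)) =
    {![true,true,true], ![true,true,false], ![true,false,true], ![true,false,false],
     ![false,true,true], ![false,true,false], ![false,false,true], ![false,false,false]} := by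
    decide
  rw [this]
  simp only [ising_eval, stp]
  rw [Finset.sum_insert (by decide), Finset.sum_insert (by decide), Finset.sum_insert (by decide),
    Finset.sum_insert (by decide), Finset.sum_insert (by decide), Finset.sum_insert (by decide),
    Finset.sum_insert (by decide), Finset.sum_singleton]
  simp
  ring

lemma prob_fourier (θ l : ℝ) (hl : 0 < l) (n : ℕ) (hn : 0 < n) :
    2 * (Real.pi : ℂ) * (iidProb (isingP θ chainA) n {xs | Ahat xs 0 1 ≤ Ahat xs 0 2} : ℂ) =
    ∫ t in (-Real.pi)..Real.pi, ((1 - θ) + θ^2 * cexp (l + t * I) +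
      θ * (1-θ) * cexp (-(l + t * I)))^n * (1 - cexp (-(l + t * I)))⁻¹ := by
  have hne : ∀ t : ℝ, 1 - cexp (-(l + t * I)) ≠ 0 := by
    intro t h
    have h1 : ‖cexp (-(l + t * I))‖ = Real.exp (-l) := by rw [Complex.norm_exp]; simp
    rw [← sub_eq_zero.mp h, norm_one] at h1
    have hlt : Real.exp (-l) < 1 := by simpa using hl
    linarith
  simp_rw [← sum_ising, Fintype.sum_pow, Finset.sum_mul]
  rw [intervalIntegral.integral_finsetSum]
  · unfold iidProb
    push_cast
    rw [Finset.mul_sum]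
    refine Finset.sum_congr rfl fun xs _ => ?_
    have e : ∀ t : ℝ, (∏ i, ((isingP θ chainA (xs i) : ℂ) * cexp (stp (xs i) * (l + t * I)))) *
        (1 - cexp (-(l + t * I)))⁻¹ = (∏ i, (isingP θ chainA (xs i) : ℂ)) *
        (cexp ((∑ k, stp (xs k) : ℤ) * (l + t * I)) * (1 - cexp (-(l + t * I)))⁻¹) := by
      intro t
      rw [Finset.prod_mul_distrib, ← Complex.exp_sum, ← Finset.sum_mul]
      push_cast
      ring
    simp_rw [e]
    rw [intervalIntegral.integral_const_mul, ind_int l hl]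
    simp only [Set.mem_ofPred_eq, event_iff hn]
    split_ifs <;> simp
    ring
  · intro xs _
    apply Continuous.intervalIntegrable
    refine Continuous.mul ?_ (Continuous.inv₀ (by fun_prop) hne)
    fun_prop

end Fourier

section Final
open MeasureTheory Topology

lemma theta_facts (θ : ℝ) (hθ0 : 0 < θ) (hθ1 : θ < 1 / 2) :
    ∃ r M : ℝ, 0 < r ∧ 0 < M ∧ M = 1 - θ + 2 * θ * r ∧ r = (1 - θ) * zTheta θ ∧
      r * zTheta θ = θ ∧ Real.exp (-Kexp θ) = M ∧ sigmaSq θ * M = 2 * θ * r ∧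
      0 < zTheta θ ∧ zTheta θ < 1 ∧ 0 < sigmaSq θ ∧ sigmaSq θ < 1 := by
  have h1 : 0 < 1 - θ := by linarith
  have hz0 : 0 < zTheta θ := Real.sqrt_pos.mpr (by positivity)
  have hzz : zTheta θ ^ 2 = θ / (1 - θ) := Real.sq_sqrt (by positivity)
  have hz1 : zTheta θ < 1 := by
    have : zTheta θ ^ 2 < 1 := by rw [hzz, div_lt_one h1]; linarith
    nlinarith
  have hr : 0 < (1 - θ) * zTheta θ := by positivity
  have hsq : Real.sqrt (4 * θ * (1 - θ)) = 2 * ((1 - θ) * zTheta θ) := by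
    rw [show 4 * θ * (1 - θ) = (2 * ((1 - θ) * zTheta θ))^2 by
      rw [mul_pow, mul_pow, hzz]; field_simp; ring]
    exact Real.sqrt_sq (by positivity)
  have hM : 0 < 1 - θ + 2 * θ * ((1 - θ) * zTheta θ) := by positivity
  have hK : Real.exp (-Kexp θ) = 1 - θ + 2 * θ * ((1 - θ) * zTheta θ) := by
    unfold Kexp
    rw [neg_neg, hsq, Real.exp_log]
    · ring
    · linarith
  have hs : sigmaSq θ * (1 - θ + 2 * θ * ((1 - θ) * zTheta θ)) = 2 * θ * ((1 - θ) * zTheta θ) := by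
    rw [← hK]
    unfold sigmaSq
    rw [hsq, mul_assoc, ← Real.exp_add]
    simp; ring
  have hs0 : 0 < sigmaSq θ := by
    unfold sigmaSq
    rw [hsq]; positivity
  refine ⟨(1 - θ) * zTheta θ, _, hr, hM, rfl, rfl, ?_, hK, hs, hz0, hz1, hs0, ?_⟩
  · rw [mul_assoc, ← sq, hzz]; field_simp
  · by_contra hc
    push Not at hc
    nlinarith

lemma prob_real (θ : ℝ) (hθ0 : 0 < θ) (hθ1 : θ < 1 / 2) (n : ℕ) (hn : 0 < n) :
    2 * Real.pi * iidProb (isingP θ chainA) n {xs | Ahat xs 0 1 ≤ Ahat xs 0 2} =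
    Real.exp (-(n:ℝ) * Kexp θ) * ∫ t in (-Real.pi)..Real.pi,
      (1 - sigmaSq θ * (1 - Real.cos t))^n * gz (zTheta θ) t := by
  obtain ⟨r, M, hr, hM, hMe, hrz, hrz2, hK, hs, hz0, hz1, hs0, hs1⟩ := theta_facts θ hθ0 hθ1
  set z := zTheta θ
  set s := sigmaSq θ
  have hl : 0 < -Real.log z := by linarith [Real.log_neg hz0 hz1]
  have hexp : ∀ t : ℝ, Complex.exp (-(((-Real.log z : ℝ):ℂ) + t * Complex.I)) =
      z * (Real.cos t - Real.sin t * Complex.I) := by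
    intro t
    rw [neg_add, Complex.exp_add, Complex.ofReal_neg, neg_neg, ← Complex.ofReal_exp,
      Real.exp_log hz0, ← neg_mul, Complex.exp_mul_I, Complex.cos_neg, Complex.sin_neg]
    push_cast; ring
  have hexp2 : ∀ t : ℝ, Complex.exp (((-Real.log z : ℝ):ℂ) + t * Complex.I) =
      (z:ℂ)⁻¹ * (Real.cos t + Real.sin t * Complex.I) := by
    intro t
    rw [Complex.exp_add, ← Complex.ofReal_exp, Real.exp_neg,
      Real.exp_log hz0, Complex.exp_mul_I]
    push_cast; ring
  have hf := prob_fourier θ _ hl n hn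
  have hzc : (z:ℂ) ≠ 0 := by exact_mod_cast hz0.ne'
  have hbase : ∀ t : ℝ, (1 - (θ:ℂ)) + θ^2 * ((z:ℂ)⁻¹ * (Real.cos t + Real.sin t * Complex.I)) +
      θ * (1-θ) * (z * (Real.cos t - Real.sin t * Complex.I)) =
      ((M * (1 - s * (1 - Real.cos t)) : ℝ) : ℂ) := by
    intro t
    have h1 : (θ:ℂ) * (z:ℂ)⁻¹ = r := by
      rw [mul_inv_eq_iff_eq_mul₀ hzc]; exact_mod_cast hrz2.symm
    have h2 : (1 - (θ:ℂ)) * z = r := by exact_mod_cast hrz.symm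
    have h3 : M * (1 - s * (1 - Real.cos t)) = 1 - θ + 2 * θ * r * Real.cos t := by
      have : M * (1 - s * (1 - Real.cos t)) = M - s * M * (1 - Real.cos t) := by ring
      rw [this, hs, hMe]; ring
    rw [h3]
    push_cast
    linear_combination (θ:ℂ) * (Complex.cos t + Complex.sin t * Complex.I) * h1 +
      θ * (Complex.cos t - Complex.sin t * Complex.I) * h2
  simp_rw [hexp, hexp2, hbase] at hf
  have hre : ∀ t : ℝ, ((((M * (1 - s * (1 - Real.cos t)) : ℝ) : ℂ))^n *
      (1 - (z:ℂ) * (Real.cos t - Real.sin t * Complex.I))⁻¹).re =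
      M^n * ((1 - s * (1 - Real.cos t))^n * gz z t) := by
    intro t
    rw [← Complex.ofReal_pow, Complex.re_ofReal_mul, mul_pow, mul_assoc, Complex.inv_re]
    congr 2
    unfold gz
    have hc := Real.sin_sq_add_cos_sq t
    congr 1
    · simp only [Complex.sub_re, Complex.one_re, Complex.mul_re,
        Complex.mul_im, Complex.ofReal_re, Complex.ofReal_im, Complex.I_re, Complex.I_im,
        Complex.sub_im]
      ring
    · rw [Complex.normSq_apply]
      simp only [Complex.sub_re, Complex.sub_im, Complex.one_re, Complex.one_im, Complex.mul_re,
        Complex.mul_im, Complex.ofReal_re, Complex.ofReal_im, Complex.I_re, Complex.I_im]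
      linear_combination z^2 * hc
  have hne : ∀ t : ℝ, 1 - (z:ℂ) * (Real.cos t - Real.sin t * Complex.I) ≠ 0 := by
    intro t h
    have := congrArg Complex.re h
    simp only [Complex.sub_re, Complex.one_re, Complex.mul_re,
        Complex.mul_im, Complex.ofReal_re, Complex.ofReal_im, Complex.I_re, Complex.I_im,
        Complex.sub_im, Complex.zero_re] at this
    nlinarith [Real.cos_le_one t]
  have hint : IntervalIntegrable (fun t : ℝ => ((((M * (1 - s * (1 - Real.cos t)) : ℝ) : ℂ))^n *
      (1 - (z:ℂ) * (Real.cos t - Real.sin t * Complex.I))⁻¹)) volume (-Real.pi) Real.pi := by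
    apply Continuous.intervalIntegrable
    refine Continuous.mul (by fun_prop) (Continuous.inv₀ (by fun_prop) hne)
  have h4 := congrArg Complex.re hf
  have h5 := Complex.reCLM.intervalIntegral_comp_comm hint
  simp only [Complex.reCLM_apply] at h5
  rw [← h5] at h4
  simp_rw [hre] at h4
  rw [intervalIntegral.integral_const_mul] at h4
  have h6 : Real.exp (-(n:ℝ) * Kexp θ) = M^n := by
    rw [← hK, ← Real.exp_nat_mul]; congr 1; ring
  rw [h6, ← h4]
  rw [show (2 * (Real.pi:ℂ)) = ((2 * Real.pi : ℝ) : ℂ) by push_cast; ring, Complex.re_ofReal_mul,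
    Complex.ofReal_re]

end Final

/-- exact asymptotics of the crossover probability
`ℙ(Â_{1,3} ≥ Â_{1,2}) = f(n)(1 + o(n⁻¹))` for the 3-node chain. -/
theorem stmt10 (θ : ℝ) (hθ0 : 0 < θ) (hθ1 : θ < 1 / 2) :
    Filter.Tendsto (fun n : ℕ =>
      (n : ℝ) * (iidProb (isingP θ chainA) n {xs | Ahat xs 0 1 ≤ Ahat xs 0 2} / fn θ n - 1))
      Filter.atTop (nhds 0) := by
  obtain ⟨r, M, hr, hM, hMe, hrz, hrz2, hK, hs, hz0, hz1, hs0, hs1⟩ := theta_facts θ hθ0 hθ1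
  have hL := laplace (sigmaSq θ) (zTheta θ) hs0 hs1 hz0 hz1
  have hP := prob_real θ hθ0 hθ1
  have hfn : ∀ n : ℕ, fn θ n = Real.exp (-(n : ℝ) * Kexp θ)
    / Real.sqrt (2 * Real.pi * sigmaSq θ * n)
    * (1 + (1 - 3 * sigmaSq θ) / (8 * sigmaSq θ * n)) / (1 - zTheta θ)
    * (1 - zTheta θ * (1 + zTheta θ) / (2 * (1 - zTheta θ) ^ 2 * sigmaSq θ * n)) :=
    fun n => rfl
  generalize zTheta θ = z at *
  generalize sigmaSq θ = s at *
  have h1z : 0 < 1 - z := by linarith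
  set α := (1 - 3 * s) / (8 * s) with hα
  set β := z * (1 + z) / (2 * (1 - z) ^ 2 * s) with hβ
  set C := 1 / (1 - z) * Real.sqrt (2 * Real.pi / s) with hC
  have hC0 : 0 < C := by have := Real.pi_pos; positivity
  have hinv : Tendsto (fun n : ℕ => ((n:ℝ))⁻¹) atTop (nhds 0) := tendsto_inv_atTop_nhds_zero_nat
  have ha : Tendsto (fun n : ℕ => 1 + α * ((n:ℝ))⁻¹) atTop (nhds 1) := by
    simpa using (hinv.const_mul α).const_add 1
  have hb : Tendsto (fun n : ℕ => 1 - β * ((n:ℝ))⁻¹) atTop (nhds 1) := by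
    simpa using (hinv.const_mul β).const_sub 1
  have hlim := (((hL.div_const C).sub_const (α - β)).add (hinv.const_mul (α * β))).div
    (ha.mul hb) (by norm_num)
  have e0 : (C * (α - β) / C - (α - β) + α * β * 0) / (1 * 1) = 0 := by field_simp; ring
  rw [e0] at hlim
  refine hlim.congr' ?_
  filter_upwards [eventually_gt_atTop 0, ha.eventually_ne one_ne_zero,
    hb.eventually_ne one_ne_zero] with n hn hna hnb
  have hn' : (0:ℝ) < n := by exact_mod_cast hn
  have hPn := hP n hn
  have hpi := Real.pi_pos
  simp only [Pi.div_apply]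
  generalize (∫ t in (-Real.pi)..Real.pi, (1 - s * (1 - Real.cos t))^n * gz z t) = J at *
  have hPn' : iidProb (isingP θ chainA) n {xs | Ahat xs 0 1 ≤ Ahat xs 0 2} =
      Real.exp (-(n:ℝ) * Kexp θ) * J / (2 * Real.pi) := by
    rw [← hPn]; field_simp
  have hq1 : Real.sqrt (2 * Real.pi * s * n) = 2 * Real.pi * Real.sqrt n /
      Real.sqrt (2 * Real.pi / s) := by
    rw [eq_div_iff (by positivity), ← Real.sqrt_mul (by positivity),
      show 2 * Real.pi * s * n * (2 * Real.pi / s) = (2 * Real.pi)^2 * n by field_simp,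
      Real.sqrt_mul (by positivity), Real.sqrt_sq (by positivity)]
  have hfn' : fn θ n = Real.exp (-(n:ℝ) * Kexp θ) * C / (2 * Real.pi * Real.sqrt n) *
      ((1 + α * ((n:ℝ))⁻¹) * (1 - β * ((n:ℝ))⁻¹)) := by
    have ea : (1 - 3 * s) / (8 * s * n) = α * ((n:ℝ))⁻¹ := by rw [hα]; field_simp
    have eb : z * (1 + z) / (2 * (1 - z) ^ 2 * s * n) = β * ((n:ℝ))⁻¹ := by rw [hβ]; field_simp
    rw [hfn, hq1, ea, eb, hC]
    field_simp
  have hratio : iidProb (isingP θ chainA) n {xs | Ahat xs 0 1 ≤ Ahat xs 0 2} / fn θ n =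
      Real.sqrt n * J / C / ((1 + α * ((n:ℝ))⁻¹) * (1 - β * ((n:ℝ))⁻¹)) := by
    rw [hPn', hfn']
    have := Real.exp_pos (-(n:ℝ) * Kexp θ)
    generalize (1 + α * ((n:ℝ))⁻¹) * (1 - β * ((n:ℝ))⁻¹) = D
    have hsn : Real.sqrt n ≠ 0 := by positivity
    field_simp
  rw [hratio]
  have hD : (1 + α * ((n:ℝ))⁻¹) * (1 - β * ((n:ℝ))⁻¹) ≠ 0 := mul_ne_zero hna hnb
  have eD : ∀ X D : ℝ, D ≠ 0 → (n:ℝ) * (X / D - 1) * D = n * (X - D) := by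
    intro X D hD; field_simp
  rw [div_eq_iff hD, eD _ _ hD]
  field_simp
  ring
end
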